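/- arXiv:2010.15204 — 2 statements merged into one kernel-verified Lean document; each statement's English description precedes it below -/
import Mathlib

section
/- Let γ : [a,b] → ℝ³ be a closed rectifiable curve (γ(a) = γ(b)) of length L, and let x ∈ ℝ³ and r > 0 be such that the sphere S(x,r) = {y ∈ ℝ³ : |y − x| = r} is contained in the convex hull of γ([a,b]) and |γ(t) − x| ≥ r for all t ∈ [a,b]. Then L ≥ 4πr. -/
open MeasureTheory Set Real
open scoped ENNReal NNReal RealInnerProductSpace

noncomputable section

abbrev E3 := EuclideanSpace ℝ (Fin 3)

/-- clamp of `β` to `[-κ, κ]` -/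
def clampR (β κ : ℝ) : ℝ := max (-κ) (min κ β)

/-- half-width of the arc seen at height with ratio `w` from distance `ρ` -/
def kap (ρ w : ℝ) : ℝ := arccos (1 / (ρ * w))

lemma kap_nonneg (ρ w : ℝ) : 0 ≤ kap ρ w := arccos_nonneg _

lemma kap_lt {ρ w : ℝ} (hρ : 0 < ρ) (hw : 0 < w) : kap ρ w < π / 2 := by
  unfold kap
  rw [arccos_lt_pi_div_two]; positivity

lemma clampR_eq_self {β κ : ℝ} (h : |β| ≤ κ) : clampR β κ = β := by
  unfold clampR
  rw [abs_le] at h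
  rw [min_eq_right h.2, max_eq_right h.1]

lemma clampR_pos {β κ : ℝ} (hκ : 0 ≤ κ) (h : κ ≤ β) : clampR β κ = κ := by
  unfold clampR
  rw [min_eq_left h, max_eq_right (by linarith)]

lemma clampR_neg {β κ : ℝ} (hκ : 0 ≤ κ) (h : β ≤ -κ) : clampR β κ = -κ := by
  unfold clampR
  rw [min_eq_right (by linarith), max_eq_left (by linarith)]

lemma clampR_odd {β κ : ℝ} (hκ : 0 ≤ κ) : clampR (-β) κ = - clampR β κ := by
  rcases le_or_gt |β| κ with h | h
  · rw [clampR_eq_self h, clampR_eq_self (by rwa [abs_neg])]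
  · rcases le_total 0 β with h0 | h0
    · rw [abs_of_nonneg h0] at h
      rw [clampR_pos hκ h.le, clampR_neg hκ (by linarith)]
    · rw [abs_of_nonpos h0] at h
      rw [clampR_pos (β := -β) hκ (by linarith), clampR_neg hκ (by linarith)]; ring

/-- The set of angles -/
def arcP (ρ β w : ℝ) : Set ℝ := {θ | θ ∈ Ioo (-π) π ∧ 1 ≤ w * (ρ * cos (θ - β))}

lemma arcP_empty {ρ β w : ℝ} (hρ : 0 < ρ) (hw : 0 < w) (h : ρ * w < 1) : arcP ρ β w = ∅ := by
  ext θ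
  simp only [arcP, mem_ofPred_eq, mem_empty_iff_false, iff_false, not_and, not_le]
  intro _
  have := cos_le_one (θ - β)
  calc w * (ρ * cos (θ - β)) ≤ w * (ρ * 1) := by gcongr
    _ < 1 := by linarith

lemma arcP_eq {ρ β w : ℝ} (hρ : 0 < ρ) (hw : 0 < w) (h : 1 ≤ ρ * w)
    (hβ : β ∈ Ioo (-(π / 2)) (π / 2)) :
    arcP ρ β w = Icc (β - kap ρ w) (β + kap ρ w) := by
  have hk := kap_lt hρ hw
  have hk0 := kap_nonneg ρ w
  have hρw : 0 < ρ * w := by positivity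
  have hle : 1 / (ρ * w) ≤ 1 := by rw [div_le_one hρw]; exact h
  have hcos : cos (kap ρ w) = 1 / (ρ * w) :=
    cos_arccos (by have : 0 < 1 / (ρ * w) := by positivity
                   linarith) hle
  have key : ∀ θ, 1 ≤ w * (ρ * cos (θ - β)) ↔ cos (kap ρ w) ≤ cos |θ - β| := by
    intro θ
    rw [hcos, cos_abs, div_le_iff₀ hρw]
    constructor <;> intro h <;> linarith
  obtain ⟨hb1, hb2⟩ := hβ
  ext θ
  simp only [arcP, mem_ofPred_eq, mem_Icc, mem_Ioo]
  rw [key]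
  constructor
  · rintro ⟨⟨h1, h2⟩, h3⟩
    have hpos : 0 < cos |θ - β| := by
      have : 0 < cos (kap ρ w) := by rw [hcos]; positivity
      linarith
    have habs : |θ - β| < 3 * π / 2 := by rw [abs_lt]; constructor <;> linarith
    have h4 : |θ - β| ≤ kap ρ w := by
      by_contra hcon
      push Not at hcon
      rcases le_or_gt |θ - β| π with h5 | h5
      · have := cos_lt_cos_of_nonneg_of_le_pi hk0 h5 hcon
        linarith
      · have := cos_nonpos_of_pi_div_two_le_of_le (x := |θ - β|) (by linarith [pi_pos]) (by linarith)
        linarith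
    rw [abs_le] at h4
    constructor <;> linarith
  · rintro ⟨h1, h2⟩
    refine ⟨⟨by linarith, by linarith⟩, ?_⟩
    apply cos_le_cos_of_nonneg_of_le_pi (abs_nonneg _) (by linarith [pi_pos])
    rw [abs_le]; constructor <;> linarith

lemma kap_eq_zero {ρ w : ℝ} (hρ : 0 < ρ) (hw : 0 < w) (h : ρ * w < 1) : kap ρ w = 0 := by
  unfold kap
  rw [arccos_eq_zero, le_div_iff₀ (by positivity)]; linarith

lemma measurableSet_arcP (ρ β w : ℝ) : MeasurableSet (arcP ρ β w) := by
  have : arcP ρ β w = Ioo (-π) π ∩ {θ | 1 ≤ w * (ρ * cos (θ - β))} := by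
    ext θ; simp [arcP]
  rw [this]
  exact measurableSet_Ioo.inter (measurableSet_le (by fun_prop) (by fun_prop))

lemma volume_arcP {ρ β w : ℝ} (hρ : 0 < ρ) (hw : 0 < w)
    (hβ : β ∈ Ioo (-(π / 2)) (π / 2)) :
    volume (arcP ρ β w) = ENNReal.ofReal (2 * kap ρ w) := by
  rcases lt_or_ge (ρ * w) 1 with h | h
  · rw [arcP_empty hρ hw h, kap_eq_zero hρ hw h]; simp
  · rw [arcP_eq hρ hw h hβ, Real.volume_Icc]; congr 1; ring

lemma arccos_lip {c β₁ β₂ : ℝ} (hc0 : 0 ≤ c) (hc : c ≤ 1) (h12 : β₁ ≤ β₂)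
    (hd : β₂ - β₁ ≤ π) :
    |arccos (c * cos β₂) - arccos (c * cos β₁)| ≤ β₂ - β₁ := by
  have hb : ∀ β, -1 ≤ c * cos β ∧ c * cos β ≤ 1 := by
    intro β
    rw [← abs_le, abs_mul, abs_of_nonneg hc0]
    have := abs_cos_le_one β
    nlinarith [abs_nonneg (cos β)]
  set k1 := arccos (c * cos β₁) with hk1
  set k2 := arccos (c * cos β₂) with hk2
  have c1 : cos k1 = c * cos β₁ := cos_arccos (hb _).1 (hb _).2
  have c2 : cos k2 = c * cos β₂ := cos_arccos (hb _).1 (hb _).2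
  have s1 : 0 ≤ sin k1 := sin_nonneg_of_nonneg_of_le_pi (arccos_nonneg _) (arccos_le_pi _)
  have s2 : 0 ≤ sin k2 := sin_nonneg_of_nonneg_of_le_pi (arccos_nonneg _) (arccos_le_pi _)
  have e1 := sin_sq_add_cos_sq k1
  have e2 := sin_sq_add_cos_sq k2
  have f1 := sin_sq_add_cos_sq β₁
  have f2 := sin_sq_add_cos_sq β₂
  have key : cos (β₂ - β₁) ≤ cos |k2 - k1| := by
    rw [cos_abs, cos_sub, cos_sub, c1, c2]
    have h1 : sin k1 ^ 2 = sin β₁ ^ 2 + (1 - c ^ 2) * cos β₁ ^ 2 := by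
      rw [c1] at e1; nlinarith
    have h2 : sin k2 ^ 2 = sin β₂ ^ 2 + (1 - c ^ 2) * cos β₂ ^ 2 := by
      rw [c2] at e2; nlinarith
    have hc2 : 0 ≤ 1 - c ^ 2 := by nlinarith
    have h3 : (sin β₂ * sin β₁ + (1 - c ^ 2) * (cos β₂ * cos β₁)) ^ 2 ≤ (sin k2 * sin k1) ^ 2 := by
      rw [mul_pow (sin k2), h1, h2]
      nlinarith [mul_nonneg hc2 (sq_nonneg (sin β₂ * cos β₁ - cos β₂ * sin β₁))]
    have h4 := abs_le_of_sq_le_sq h3 (mul_nonneg s2 s1)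
    linarith [le_abs_self (sin β₂ * sin β₁ + (1 - c ^ 2) * (cos β₂ * cos β₁))]
  by_contra hcon
  push Not at hcon
  have := cos_lt_cos_of_nonneg_of_le_pi (x := β₂ - β₁) (y := |k2 - k1|) (by linarith) (by
    rw [abs_le]; constructor <;> linarith [arccos_nonneg (c * cos β₁), arccos_nonneg (c * cos β₂),
      arccos_le_pi (c * cos β₁), arccos_le_pi (c * cos β₂)]) hcon
  linarith

lemma abs_le_kap_iff {ρ β w : ℝ} (hρ : 0 < ρ) (hw : 0 < w)
    (hβ : β ∈ Ioo (-(π / 2)) (π / 2)) (h : 1 ≤ ρ * cos β * w) : |β| ≤ kap ρ w := by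
  unfold kap
  rw [← arccos_cos (abs_nonneg β) (by rw [abs_le]; constructor <;> linarith [hβ.1, hβ.2, pi_pos]),
    cos_abs]
  apply arccos_le_arccos
  rw [div_le_iff₀ (by positivity)]; linarith

lemma kap_le_abs {ρ β w : ℝ} (hρ : 0 < ρ) (hw : 0 < w)
    (hβ : β ∈ Ioo (-(π / 2)) (π / 2)) (h : ρ * cos β * w ≤ 1) : kap ρ w ≤ |β| := by
  unfold kap
  rw [← arccos_cos (abs_nonneg β) (by rw [abs_le]; constructor <;> linarith [hβ.1, hβ.2, pi_pos]),
    cos_abs]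
  apply arccos_le_arccos
  rw [le_div_iff₀ (by positivity)]; linarith

open scoped symmDiff in
lemma arcP_subset_of_nonneg {ρ₁ ρ₂ β₁ β₂ w : ℝ} (hρ₁ : 0 < ρ₁) (hρ₂ : 0 < ρ₂) (hw : 0 < w)
    (hd : ρ₁ * cos β₁ = ρ₂ * cos β₂) (hs : ρ₁ * sin β₁ ≤ ρ₂ * sin β₂)
    (h0 : 0 ≤ ρ₁ * sin β₁)
    (hdw : ρ₁ * cos β₁ * w < 1) (hdp : 0 < ρ₁ * cos β₁) : arcP ρ₁ β₁ w ⊆ arcP ρ₂ β₂ w := by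
  rintro θ ⟨h1, h2⟩
  refine ⟨h1, ?_⟩
  rw [cos_sub] at h2 ⊢
  have e1 : w * (ρ₁ * (cos θ * cos β₁ + sin θ * sin β₁))
    = (ρ₁ * cos β₁ * w) * cos θ + w * sin θ * (ρ₁ * sin β₁) := by ring
  have e2 : w * (ρ₂ * (cos θ * cos β₂ + sin θ * sin β₂))
    = (ρ₁ * cos β₁ * w) * cos θ + w * sin θ * (ρ₂ * sin β₂) := by rw [hd]; ring
  rw [e1] at h2
  rw [e2]
  have hc : (ρ₁ * cos β₁ * w) * cos θ < 1 := by
    have := cos_le_one θ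
    have h3 : 0 < ρ₁ * cos β₁ * w := by positivity
    nlinarith
  have hpos : 0 < w * sin θ * (ρ₁ * sin β₁) := by linarith
  have hpos2 : 0 < w * sin θ := by
    by_contra hcon
    push Not at hcon
    have := mul_nonpos_of_nonpos_of_nonneg hcon h0
    linarith
  have := mul_le_mul_of_nonneg_left hs hpos2.le
  linarith

lemma arcP_subset_of_nonpos {ρ₁ ρ₂ β₁ β₂ w : ℝ} (hρ₁ : 0 < ρ₁) (hρ₂ : 0 < ρ₂) (hw : 0 < w)
    (hd : ρ₁ * cos β₁ = ρ₂ * cos β₂) (hs : ρ₁ * sin β₁ ≤ ρ₂ * sin β₂)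
    (h0 : ρ₂ * sin β₂ ≤ 0)
    (hdw : ρ₁ * cos β₁ * w < 1) (hdp : 0 < ρ₁ * cos β₁) : arcP ρ₂ β₂ w ⊆ arcP ρ₁ β₁ w := by
  have := arcP_subset_of_nonneg (β₁ := -β₂) (β₂ := -β₁) hρ₂ hρ₁ hw (by simp [hd]) (by simpa using hs)
    (by simpa using h0) (by rw [cos_neg, ← hd]; exact hdw) (by rw [cos_neg, ← hd]; exact hdp)
  rintro θ ⟨⟨h1, h2⟩, h3⟩
  obtain ⟨h4, h5⟩ := this (show -θ ∈ arcP ρ₂ (-β₂) w from ⟨⟨by linarith, by linarith⟩, by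
    rw [show -θ - -β₂ = -(θ - β₂) by ring, cos_neg]; exact h3⟩)
  refine ⟨⟨h1, h2⟩, ?_⟩
  rw [show -θ - -β₁ = -(θ - β₁) by ring, cos_neg] at h5; exact h5

open scoped symmDiff in
lemma volume_symmDiff_arcP {ρ₁ ρ₂ β₁ β₂ w : ℝ} (hρ₁ : 0 < ρ₁) (hρ₂ : 0 < ρ₂) (hw : 0 < w)
    (hβ₁ : β₁ ∈ Ioo (-(π / 2)) (π / 2)) (hβ₂ : β₂ ∈ Ioo (-(π / 2)) (π / 2))
    (hd : ρ₁ * cos β₁ = ρ₂ * cos β₂) (hs : ρ₁ * sin β₁ ≤ ρ₂ * sin β₂) :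
    clampR β₁ (kap ρ₁ w) ≤ clampR β₂ (kap ρ₂ w) ∧
    volume (arcP ρ₁ β₁ w ∆ arcP ρ₂ β₂ w) ≤
      ENNReal.ofReal (2 * clampR β₂ (kap ρ₂ w) - 2 * clampR β₁ (kap ρ₁ w)) := by
  have hc1 : 0 < cos β₁ := cos_pos_of_mem_Ioo hβ₁
  have hc2 : 0 < cos β₂ := cos_pos_of_mem_Ioo hβ₂
  have hdp : 0 < ρ₁ * cos β₁ := by positivity
  have k1 := kap_nonneg ρ₁ w
  have k2 := kap_nonneg ρ₂ w
  have htan : tan β₁ ≤ tan β₂ := by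
    rw [tan_eq_sin_div_cos, tan_eq_sin_div_cos, div_le_div_iff₀ hc1 hc2]
    have : ρ₁ * sin β₁ * (ρ₂ * cos β₂) ≤ ρ₂ * sin β₂ * (ρ₁ * cos β₁) := by
      rw [hd]; exact mul_le_mul_of_nonneg_right hs (by positivity)
    have h3 : 0 < ρ₁ * ρ₂ := by positivity
    nlinarith
  have h12 : β₁ ≤ β₂ := (strictMonoOn_tan.le_iff_le hβ₁ hβ₂).1 htan
  rcases le_or_gt 1 (ρ₁ * cos β₁ * w) with h | h
  · have hh : 1 ≤ ρ₂ * cos β₂ * w := by rw [← hd]; exact h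
    rw [clampR_eq_self (abs_le_kap_iff hρ₁ hw hβ₁ h), clampR_eq_self (abs_le_kap_iff hρ₂ hw hβ₂ hh)]
    refine ⟨h12, ?_⟩
    have hw1 : 1 ≤ ρ₁ * w := by nlinarith [cos_le_one β₁, mul_pos hρ₁ hw]
    have hw2 : 1 ≤ ρ₂ * w := by nlinarith [cos_le_one β₂, mul_pos hρ₂ hw]
    have hkk : |kap ρ₂ w - kap ρ₁ w| ≤ β₂ - β₁ := by
      have e1 : kap ρ₁ w = arccos (1 / (ρ₁ * cos β₁ * w) * cos β₁) := by
        unfold kap; congr 1; field_simp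
      have e2 : kap ρ₂ w = arccos (1 / (ρ₁ * cos β₁ * w) * cos β₂) := by
        unfold kap; congr 1; rw [hd]; field_simp
      rw [e1, e2]
      apply arccos_lip (by positivity) _ h12 (by linarith [hβ₁.1, hβ₂.2])
      rw [div_le_one (by positivity)]; exact h
    rw [abs_le] at hkk
    rw [arcP_eq hρ₁ hw hw1 hβ₁, arcP_eq hρ₂ hw hw2 hβ₂]
    calc volume (Icc (β₁ - kap ρ₁ w) (β₁ + kap ρ₁ w) ∆ Icc (β₂ - kap ρ₂ w) (β₂ + kap ρ₂ w))
        ≤ volume (Icc (β₁ - kap ρ₁ w) (β₂ - kap ρ₂ w) ∪ Icc (β₁ + kap ρ₁ w) (β₂ + kap ρ₂ w)) := by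
          apply measure_mono
          intro θ hθ
          rw [Set.mem_symmDiff] at hθ
          simp only [mem_Icc, mem_union, not_and_or, not_le] at hθ ⊢
          rcases hθ with ⟨⟨h1, h2⟩, h3 | h3⟩ | ⟨⟨h1, h2⟩, h3 | h3⟩
          · left; constructor <;> linarith
          · exfalso; linarith
          · exfalso; linarith
          · right; constructor <;> linarith
      _ ≤ _ := measure_union_le _ _
      _ = _ := by
          rw [Real.volume_Icc, Real.volume_Icc, ← ENNReal.ofReal_add (by linarith) (by linarith)]
          congr 1; ring
  · have hh : ρ₂ * cos β₂ * w < 1 := by rw [← hd]; exact h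
    have kb1 := kap_le_abs hρ₁ hw hβ₁ h.le
    have kb2 := kap_le_abs hρ₂ hw hβ₂ hh.le
    have m1 := volume_arcP hρ₁ hw hβ₁
    have m2 := volume_arcP hρ₂ hw hβ₂
    have hπ := pi_pos
    rcases le_total 0 β₁ with p1 | p1
    · have p2 : 0 ≤ β₂ := p1.trans h12
      rw [abs_of_nonneg p1] at kb1
      rw [abs_of_nonneg p2] at kb2
      rw [clampR_pos k1 kb1, clampR_pos k2 kb2]
      have hsub := arcP_subset_of_nonneg hρ₁ hρ₂ hw hd hs (mul_nonneg hρ₁.le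
        (sin_nonneg_of_nonneg_of_le_pi p1 (by linarith [hβ₁.2]))) h hdp
      have hle : kap ρ₁ w ≤ kap ρ₂ w := by
        have := measure_mono (μ := volume) hsub
        rw [m1, m2, ENNReal.ofReal_le_ofReal_iff (by linarith)] at this
        linarith
      refine ⟨hle, ?_⟩
      rw [symmDiff_of_le hsub, measure_sdiff hsub (measurableSet_arcP _ _ _).nullMeasurableSet
        (by rw [m1]; exact ENNReal.ofReal_ne_top), m1, m2, ← ENNReal.ofReal_sub _ (by linarith)]
    · rcases le_total β₂ 0 with p2 | p2
      · rw [abs_of_nonpos p1] at kb1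
        rw [abs_of_nonpos p2] at kb2
        rw [clampR_neg k1 (by linarith), clampR_neg k2 (by linarith)]
        have hsub := arcP_subset_of_nonpos hρ₁ hρ₂ hw hd hs (by
          have := sin_nonpos_of_nonpos_of_neg_pi_le p2 (by linarith [hβ₂.1])
          nlinarith) h hdp
        have hle : kap ρ₂ w ≤ kap ρ₁ w := by
          have := measure_mono (μ := volume) hsub
          rw [m1, m2, ENNReal.ofReal_le_ofReal_iff (by linarith)] at this
          linarith
        refine ⟨by linarith, ?_⟩
        rw [symmDiff_comm, symmDiff_of_le hsub, measure_sdiff hsub (measurableSet_arcP _ _ _).nullMeasurableSet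
          (by rw [m2]; exact ENNReal.ofReal_ne_top), m1, m2, ← ENNReal.ofReal_sub _ (by linarith)]
        apply le_of_eq; congr 1; ring
      · rw [abs_of_nonpos p1] at kb1
        rw [abs_of_nonneg p2] at kb2
        rw [clampR_neg k1 (by linarith), clampR_pos k2 kb2]
        refine ⟨by linarith, ?_⟩
        calc volume (arcP ρ₁ β₁ w ∆ arcP ρ₂ β₂ w) ≤ volume (arcP ρ₁ β₁ w ∪ arcP ρ₂ β₂ w) :=
              measure_mono symmDiff_le_sup
          _ ≤ _ := measure_union_le _ _
          _ = _ := by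
            rw [m1, m2, ← ENNReal.ofReal_add (by linarith) (by linarith)]; congr 1; ring

def qf (x : ℝ × ℝ) : ℝ := x.1 / √(x.1 ^ 2 + x.2 ^ 2)

def halfD : Set (ℝ × ℝ) := {x | 0 < x.1 ∧ x.1 ^ 2 + x.2 ^ 2 < 1}

def nuM : Measure (ℝ × ℝ) := (volume.restrict halfD).withDensity (fun x => ENNReal.ofReal x.1)

lemma measurable_qf : Measurable qf := by unfold qf; fun_prop

lemma measurableSet_halfD : MeasurableSet halfD := by
  have : halfD = {x : ℝ × ℝ | 0 < x.1} ∩ {x | x.1 ^ 2 + x.2 ^ 2 < 1} := by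
    ext; simp [halfD]
  rw [this]
  exact (measurableSet_lt (by fun_prop) (by fun_prop)).inter
    (measurableSet_lt (by fun_prop) (by fun_prop))

lemma nuM_finite : IsFiniteMeasure nuM := by
  constructor
  unfold nuM
  rw [withDensity_apply _ MeasurableSet.univ, Measure.restrict_univ]
  have hsub : halfD ⊆ Icc ((-1, -1) : ℝ × ℝ) (1, 1) := by
    rintro ⟨r, z⟩ ⟨h1, h2⟩
    simp only at h1 h2
    refine ⟨⟨?_, ?_⟩, ⟨?_, ?_⟩⟩ <;> simp only <;> nlinarith
  calc ∫⁻ x in halfD, ENNReal.ofReal x.1 ≤ ∫⁻ x in halfD, 1 := by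
        apply setLIntegral_mono' measurableSet_halfD
        rintro x hx
        rw [← ENNReal.ofReal_one]
        exact ENNReal.ofReal_le_ofReal (hsub hx).2.1
    _ = volume halfD := by simp
    _ ≤ volume (Icc ((-1, -1) : ℝ × ℝ) (1, 1)) := measure_mono hsub
    _ < ⊤ := isCompact_Icc.measure_lt_top

lemma nuM_qf_le {c : ℝ} (hc0 : 0 ≤ c) (hc : c ≤ 1) :
    nuM {x | c ≤ qf x} ≤ ENNReal.ofReal (2 / 3 * √(1 - c ^ 2)) := by
  have hS : MeasurableSet {x | c ≤ qf x} := measurableSet_le measurable_const measurable_qf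
  unfold nuM
  rw [withDensity_apply _ hS, Measure.restrict_restrict hS,
    ← lintegral_indicator (hS.inter measurableSet_halfD), ← lintegral_comp_polarCoord_symm]
  have hA : MeasurableSet (Ioc (0:ℝ) 1 ×ˢ Icc (-arccos c) (arccos c)) :=
    measurableSet_Ioc.prod measurableSet_Icc
  have hπ := pi_pos
  have hac : arccos c ≤ π / 2 := by rw [arccos_le_pi_div_two]; exact hc0
  calc _ ≤ ∫⁻ p in Ioc (0:ℝ) 1 ×ˢ Icc (-arccos c) (arccos c),
            ENNReal.ofReal (p.1 ^ 2 * cos p.2) := by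
        rw [← lintegral_indicator polarCoord.open_target.measurableSet, ← lintegral_indicator hA]
        apply lintegral_mono
        intro p
        by_cases hp : p ∈ polarCoord.target
        swap
        · simp only [indicator_of_notMem hp]; exact zero_le
        simp only [indicator_of_mem hp]
        by_cases hq : polarCoord.symm p ∈ {x | c ≤ qf x} ∩ halfD
        swap
        · simp only [indicator_of_notMem hq]; simp
        simp only [indicator_of_mem hq]
        simp only [polarCoord_target, polarCoord_symm_apply, mem_prod, mem_Ioi, mem_Ioo] at hp hq ⊢
        obtain ⟨hp1, hp2, hp3⟩ := hp
        obtain ⟨hq1, hq2, hq3⟩ := hq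
        simp only [mem_ofPred_eq, qf] at hq1 hq2 hq3
        have e : (p.1 * cos p.2) ^ 2 + (p.1 * sin p.2) ^ 2 = p.1 ^ 2 := by
          nlinarith [sin_sq_add_cos_sq p.2]
        rw [e, sqrt_sq hp1.le, mul_div_cancel_left₀ _ hp1.ne'] at hq1
        rw [e] at hq3
        have hmem : p ∈ Ioc (0:ℝ) 1 ×ˢ Icc (-arccos c) (arccos c) := by
          refine ⟨⟨hp1, by nlinarith⟩, ?_⟩
          rw [mem_Icc, ← abs_le, ← arccos_cos (abs_nonneg p.2) (abs_le.2 ⟨by linarith, hp3.le⟩)]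
          apply arccos_le_arccos
          rwa [cos_abs]
        rw [indicator_of_mem hmem, smul_eq_mul, ← ENNReal.ofReal_mul hp1.le]
        apply le_of_eq; congr 1; ring
    _ = ENNReal.ofReal (∫ p in Ioc (0:ℝ) 1 ×ˢ Icc (-arccos c) (arccos c), p.1 ^ 2 * cos p.2) := by
        rw [ofReal_integral_eq_lintegral_ofReal]
        · apply IntegrableOn.mono_set (t := Icc (0:ℝ) 1 ×ˢ Icc (-arccos c) (arccos c))
          · apply ContinuousOn.integrableOn_compact (isCompact_Icc.prod isCompact_Icc)
            fun_prop
          · exact prod_mono Ioc_subset_Icc_self subset_rfl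
        · filter_upwards [ae_restrict_mem hA] with p hp
          have : 0 ≤ cos p.2 := cos_nonneg_of_mem_Icc
            ⟨by linarith [hp.2.1], by linarith [hp.2.2]⟩
          exact mul_nonneg (sq_nonneg _) this
    _ = _ := by
        congr 1
        rw [Measure.volume_eq_prod, setIntegral_prod_mul (fun x : ℝ => x ^ 2) cos]
        rw [← intervalIntegral.integral_of_le zero_le_one, integral_Icc_eq_integral_Ioc,
          ← intervalIntegral.integral_of_le (by linarith [arccos_nonneg c]), integral_cos,
          integral_pow, sin_neg, sin_arccos]
        norm_num; ring

def GF (ρ β : ℝ) : ℝ := ∫ x, 2 * clampR β (kap ρ (qf x)) ∂nuM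

lemma abs_clampR_le {β κ : ℝ} (hκ : 0 ≤ κ) : |clampR β κ| ≤ |β| := by
  rcases le_or_gt |β| κ with h | h
  · rw [clampR_eq_self h]
  · rcases le_total 0 β with h0 | h0
    · rw [abs_of_nonneg h0] at h
      rw [clampR_pos hκ h.le, abs_of_nonneg hκ, abs_of_nonneg h0]; exact h.le
    · rw [abs_of_nonpos h0] at h
      rw [clampR_neg hκ (by linarith), abs_neg, abs_of_nonneg hκ, abs_of_nonpos h0]; exact h.le

lemma measurable_kap (ρ : ℝ) : Measurable (fun x => kap ρ (qf x)) := by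
  unfold kap
  have := measurable_qf
  exact measurable_arccos.comp (by fun_prop)

lemma integrable_GF (ρ β : ℝ) : Integrable (fun x => 2 * clampR β (kap ρ (qf x))) nuM := by
  have := nuM_finite
  apply Integrable.const_mul
  apply Integrable.mono' (integrable_const |β|)
  · have := measurable_kap ρ
    unfold clampR
    exact (by fun_prop : Measurable _).aestronglyMeasurable
  · filter_upwards with x
    exact abs_clampR_le (kap_nonneg _ _)

lemma GF_odd (ρ β : ℝ) : GF ρ (-β) = - GF ρ β := by
  unfold GF
  rw [← integral_neg]
  congr 1; ext x
  rw [clampR_odd (kap_nonneg _ _)]; ring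

lemma qf_pos {x : ℝ × ℝ} (hx : x ∈ halfD) : 0 < qf x := by
  have := hx.1
  unfold qf; positivity

lemma ae_nuM_mem : ∀ᵐ x ∂nuM, x ∈ halfD := by
  unfold nuM
  exact (withDensity_absolutelyContinuous _ _).ae_le (ae_restrict_mem measurableSet_halfD)

lemma GF_diff_le {ρ β₁ β₂ : ℝ} (hρ : 0 < ρ) (h0 : 0 ≤ β₁) (h12 : β₁ ≤ β₂) (h2 : β₂ < π / 2)
    (hd : 1 ≤ ρ * cos β₁) :
    GF ρ β₂ - GF ρ β₁ ≤ 2 / 3 * ρ * cos β₁ * (β₂ - β₁) := by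
  have := nuM_finite
  have hπ := pi_pos
  set d := ρ * cos β₁ with hdd
  have hdp : 0 < d := by linarith
  have hS : MeasurableSet {x | 1 / d ≤ qf x} := measurableSet_le measurable_const measurable_qf
  have hc1 : 1 / d ≤ 1 := by rw [div_le_one hdp]; exact hd
  have step : GF ρ β₂ - GF ρ β₁ ≤
      ∫ x, {x | 1 / d ≤ qf x}.indicator (fun _ => 2 * (β₂ - β₁)) x ∂nuM := by
    unfold GF
    rw [← integral_sub (integrable_GF _ _) (integrable_GF _ _)]
    apply integral_mono_ae ((integrable_GF _ _).sub (integrable_GF _ _))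
      ((integrable_const _).indicator hS)
    filter_upwards [ae_nuM_mem] with x hx
    have hq := qf_pos hx
    have hk := kap_nonneg ρ (qf x)
    by_cases hm : x ∈ {x | 1 / d ≤ qf x}
    · rw [indicator_of_mem hm]
      have : clampR β₂ (kap ρ (qf x)) - clampR β₁ (kap ρ (qf x)) ≤ β₂ - β₁ := by
        have p2 : 0 ≤ β₂ := h0.trans h12
        have c2 : clampR β₂ (kap ρ (qf x)) ≤ β₂ :=
          (le_abs_self _).trans ((abs_clampR_le hk).trans_eq (abs_of_nonneg p2))
        rcases le_total β₁ (kap ρ (qf x)) with h | h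
        · rw [clampR_eq_self (β := β₁) (by rwa [abs_of_nonneg h0])]; linarith
        · rw [clampR_pos hk h, clampR_pos hk (h.trans h12)]; linarith
      simp only [Pi.sub_apply]; linarith
    · rw [indicator_of_notMem hm]
      simp only [mem_ofPred_eq, not_le] at hm
      have h' : kap ρ (qf x) ≤ β₁ := by
        have := kap_le_abs (β := β₁) hρ hq ⟨by linarith, by linarith⟩ (by
          rw [lt_div_iff₀ hdp] at hm; rw [← hdd]; linarith)
        rwa [abs_of_nonneg h0] at this
      simp only [Pi.sub_apply]
      rw [clampR_pos hk h', clampR_pos hk (h'.trans h12)]; simp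
  refine step.trans ?_
  rw [integral_indicator hS, setIntegral_const, smul_eq_mul]
  have hν : nuM.real {x | 1 / d ≤ qf x} ≤ 2 / 3 * √(1 - (1 / d) ^ 2) := by
    apply ENNReal.toReal_le_of_le_ofReal (by positivity)
    exact nuM_qf_le (by positivity) hc1
  have hsq : 2 * √(1 - (1 / d) ^ 2) ≤ d := by
    have : √(1 - (1 / d) ^ 2) ≤ d / 2 := by
      apply sqrt_le_iff.2 ⟨by positivity, ?_⟩
      have : (d / 2) ^ 2 - (1 - (1 / d) ^ 2) = (d / 2 - 1 / d) ^ 2 := by field_simp; ring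
      nlinarith [sq_nonneg (d / 2 - 1 / d)]
    linarith
  have hb : 0 ≤ β₂ - β₁ := by linarith
  calc nuM.real {x | 1 / d ≤ qf x} * (2 * (β₂ - β₁))
      ≤ 2 / 3 * √(1 - (1 / d) ^ 2) * (2 * (β₂ - β₁)) := by gcongr
    _ = 2 / 3 * (2 * √(1 - (1 / d) ^ 2)) * (β₂ - β₁) := by ring
    _ ≤ 2 / 3 * d * (β₂ - β₁) := by gcongr
    _ = _ := by rw [hdd]; ring

lemma mono_of_quad {f : ℝ → ℝ} {B C : ℝ} (hC : 0 ≤ C)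
    (h : ∀ x y, 0 ≤ x → x ≤ y → y ≤ B → f x - C * (y - x) ^ 2 ≤ f y)
    {x y : ℝ} (hx : 0 ≤ x) (hxy : x ≤ y) (hy : y ≤ B) : f x ≤ f y := by
  have key : ∀ n : ℕ, f x - C * (y - x) ^ 2 / (n + 1) ≤ f y := by
    intro n
    have hn : (0:ℝ) < n + 1 := by positivity
    set s := (y - x) / (n + 1) with hs
    have hs0 : 0 ≤ s := div_nonneg (by linarith) hn.le
    have hsn : s * (n + 1) = y - x := by rw [hs]; field_simp
    have ind : ∀ k : ℕ, k ≤ n + 1 → f x - C * s ^ 2 * k ≤ f (x + k * s) := by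
      intro k
      induction k with
      | zero => intro _; simp
      | succ k ih =>
        intro hk
        have h1 := ih (by omega)
        have hk' : (k : ℝ) + 1 ≤ n + 1 := by exact_mod_cast hk
        have h2 := h (x + k * s) (x + (k + 1 : ℕ) * s) (by positivity)
          (by push_cast; nlinarith) (by push_cast; nlinarith)
        have e : x + (k + 1 : ℕ) * s - (x + k * s) = s := by push_cast; ring
        rw [e] at h2
        push_cast at h2 ⊢
        linarith
    have h3 := ind (n + 1) le_rfl
    push_cast at h3
    rw [show x + (n + 1) * s = y by linarith] at h3
    have e : C * (y - x) ^ 2 / (n + 1) = C * s ^ 2 * (n + 1) := by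
      rw [hs]; field_simp
    rw [e]; exact h3
  have hlim : Filter.Tendsto (fun n : ℕ => f x - C * (y - x) ^ 2 / ((n : ℝ) + 1)) Filter.atTop
      (nhds (f x - 0)) := by
    apply Filter.Tendsto.sub tendsto_const_nhds
    exact (tendsto_const_div_atTop_nhds_zero_nat (C * (y - x) ^ 2)).comp (Filter.tendsto_add_atTop_nat 1) |>.congr
      (by intro n; simp)
  rw [sub_zero] at hlim
  exact le_of_tendsto' hlim key

def PhiF (ρ β : ℝ) : ℝ := 2 / 3 * ρ * sin β - GF ρ β

lemma PhiF_odd (ρ β : ℝ) : PhiF ρ (-β) = - PhiF ρ β := by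
  unfold PhiF; rw [GF_odd, sin_neg]; ring

lemma PhiF_mono_nonneg {ρ β₁ β₂ : ℝ} (hρ : 0 < ρ) (h0 : 0 ≤ β₁) (h12 : β₁ ≤ β₂) (h2 : β₂ < π / 2)
    (hd : 1 ≤ ρ * cos β₂) : PhiF ρ β₁ ≤ PhiF ρ β₂ := by
  have hπ := pi_pos
  apply mono_of_quad (B := β₂) (C := 2 / 3 * ρ) (by positivity) _ h0 h12 le_rfl
  intro x y hx hxy hy
  have hcx : cos β₂ ≤ cos x := cos_le_cos_of_nonneg_of_le_pi hx (by linarith) (by linarith)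
  have hG := GF_diff_le hρ hx hxy (by linarith) (hd.trans (by gcongr))
  unfold PhiF
  have hsin : cos x * (y - x) - (y - x) ^ 2 ≤ sin y - sin x := by
    rcases hxy.eq_or_lt with h | h
    · rw [h]; simp
    obtain ⟨c, ⟨hc1, hc2⟩, hc⟩ := exists_deriv_eq_slope sin h continuous_sin.continuousOn
      differentiable_sin.differentiableOn
    rw [Real.deriv_sin, eq_div_iff (by linarith)] at hc
    rw [← hc]
    have : cos x - cos c ≤ c - x := by
      have := abs_cos_sub_cos_le x c
      rw [abs_sub_comm x c, abs_of_nonneg (by linarith : 0 ≤ c - x)] at this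
      exact (le_abs_self _).trans this
    nlinarith
  have : 2 / 3 * ρ * (cos x * (y - x) - (y - x) ^ 2) ≤ 2 / 3 * ρ * (sin y - sin x) := by gcongr
  linarith

lemma PhiF_mono {ρ β₁ β₂ : ℝ} (hρ : 0 < ρ) (h12 : β₁ ≤ β₂) (h1 : -(π / 2) < β₁) (h2 : β₂ < π / 2)
    (hd1 : 1 ≤ ρ * cos β₁) (hd : 1 ≤ ρ * cos β₂) : PhiF ρ β₁ ≤ PhiF ρ β₂ := by
  have z : PhiF ρ 0 = 0 := by
    have := PhiF_odd ρ 0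
    rw [neg_zero] at this; linarith
  rcases le_total 0 β₁ with h0 | h0
  · exact PhiF_mono_nonneg hρ h0 h12 h2 hd
  · rcases le_total 0 β₂ with h3 | h3
    · have a1 := PhiF_mono_nonneg hρ le_rfl h3 h2 hd
      have a2 := PhiF_mono_nonneg hρ le_rfl (neg_nonneg.2 h0) (by linarith) (by rwa [cos_neg])
      rw [PhiF_odd] at a2
      linarith
    · have a2 := PhiF_mono_nonneg hρ (neg_nonneg.2 h3) (neg_le_neg h12) (by linarith) (by rwa [cos_neg])
      rw [PhiF_odd, PhiF_odd] at a2
      linarith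

/-- cone over the cap seen from `A`, in the unit ball -/
def KK (A : E3) : Set E3 := {x | ‖x‖ < 1 ∧ ‖x‖ ≤ ⟪x, A⟫}

def TT (ρ β : ℝ) : Set (ℝ × (ℝ × ℝ)) :=
  {p | p.2.1 ^ 2 + p.2.2 ^ 2 + p.1 ^ 2 < 1 ∧
    √(p.2.1 ^ 2 + p.2.2 ^ 2 + p.1 ^ 2) ≤ p.2.1 * (ρ * cos β) + p.2.2 * (ρ * sin β)}

lemma measurableSet_TT (ρ β : ℝ) : MeasurableSet (TT ρ β) := by
  have : TT ρ β = {p : ℝ × (ℝ × ℝ) | p.2.1 ^ 2 + p.2.2 ^ 2 + p.1 ^ 2 < 1} ∩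
    {p | √(p.2.1 ^ 2 + p.2.2 ^ 2 + p.1 ^ 2) ≤ p.2.1 * (ρ * cos β) + p.2.2 * (ρ * sin β)} := by
    ext; simp [TT]
  rw [this]
  exact (measurableSet_lt (by fun_prop) (by fun_prop)).inter
    (measurableSet_le (by fun_prop) (by fun_prop))

lemma polar_mem_TT {ρ β r θ z : ℝ} (hr : 0 < r) (hθ : θ ∈ Ioo (-π) π) :
    (z, polarCoord.symm (r, θ)) ∈ TT ρ β ↔ (r, z) ∈ halfD ∧ θ ∈ arcP ρ β (qf (r, z)) := by
  have e : (r * cos θ) ^ 2 + (r * sin θ) ^ 2 + z ^ 2 = r ^ 2 + z ^ 2 := by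
    nlinarith [sin_sq_add_cos_sq θ]
  have hs : 0 < √(r ^ 2 + z ^ 2) := by positivity
  simp only [TT, halfD, arcP, qf, mem_ofPred_eq, polarCoord_symm_apply, e, hr, hθ, true_and]
  have : r / √(r ^ 2 + z ^ 2) * (ρ * cos (θ - β)) =
    (r * cos θ * (ρ * cos β) + r * sin θ * (ρ * sin β)) / √(r ^ 2 + z ^ 2) := by
    rw [cos_sub]; ring
  rw [this, one_le_div hs]

open scoped symmDiff in
lemma volume_TT {ρ₁ ρ₂ β₁ β₂ : ℝ} (hρ₁ : 0 < ρ₁) (hρ₂ : 0 < ρ₂)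
    (hβ₁ : β₁ ∈ Ioo (-(π / 2)) (π / 2)) (hβ₂ : β₂ ∈ Ioo (-(π / 2)) (π / 2))
    (hd : ρ₁ * cos β₁ = ρ₂ * cos β₂) (hs : ρ₁ * sin β₁ ≤ ρ₂ * sin β₂) :
    volume (TT ρ₁ β₁ ∆ TT ρ₂ β₂) ≤ ENNReal.ofReal (GF ρ₂ β₂ - GF ρ₁ β₁) := by
  have hT : MeasurableSet (TT ρ₁ β₁ ∆ TT ρ₂ β₂) :=
    (measurableSet_TT _ _).symmDiff (measurableSet_TT _ _)
  set F : ℝ × ℝ → ℝ≥0∞ := fun x =>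
    ENNReal.ofReal (2 * clampR β₂ (kap ρ₂ (qf x)) - 2 * clampR β₁ (kap ρ₁ (qf x))) with hF
  have hFm : Measurable F := by
    have := measurable_kap ρ₁
    have := measurable_kap ρ₂
    rw [hF]; unfold clampR; fun_prop
  set H : ℝ × ℝ → ℝ≥0∞ := halfD.indicator (fun x => ENNReal.ofReal x.1 * F x) with hH
  have hHm : Measurable H := Measurable.indicator (by fun_prop) measurableSet_halfD
  have hslice : ∀ z : ℝ, volume (Prod.mk z ⁻¹' (TT ρ₁ β₁ ∆ TT ρ₂ β₂)) ≤ ∫⁻ r, H (r, z) := by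
    intro z
    have hTz : MeasurableSet (Prod.mk z ⁻¹' (TT ρ₁ β₁ ∆ TT ρ₂ β₂)) := measurable_prodMk_left hT
    have hmem : ∀ r θ, 0 < r → θ ∈ Ioo (-π) π →
        (polarCoord.symm (r, θ) ∈ Prod.mk z ⁻¹' (TT ρ₁ β₁ ∆ TT ρ₂ β₂) ↔
          (r, z) ∈ halfD ∧ θ ∈ arcP ρ₁ β₁ (qf (r, z)) ∆ arcP ρ₂ β₂ (qf (r, z))) := by
      intro r θ hr hθ
      rw [mem_preimage, Set.mem_symmDiff, Set.mem_symmDiff, polar_mem_TT hr hθ, polar_mem_TT hr hθ]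
      tauto
    rw [← lintegral_indicator_one hTz, ← lintegral_comp_polarCoord_symm, polarCoord_target,
      Measure.volume_eq_prod, ← Measure.prod_restrict, lintegral_prod]
    · calc _ ≤ ∫⁻ r in Ioi (0:ℝ), H (r, z) := by
            apply setLIntegral_mono' measurableSet_Ioi
            intro r hr
            have hr : 0 < r := hr
            by_cases hm : (r, z) ∈ halfD
            · rw [hH, indicator_of_mem hm]
              have hq := qf_pos hm
              have hv := (volume_symmDiff_arcP hρ₁ hρ₂ hq hβ₁ hβ₂ hd hs).2
              have hms : MeasurableSet (arcP ρ₁ β₁ (qf (r, z)) ∆ arcP ρ₂ β₂ (qf (r, z))) :=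
                (measurableSet_arcP _ _ _).symmDiff (measurableSet_arcP _ _ _)
              calc _ ≤ ∫⁻ θ in Ioo (-π) π, ENNReal.ofReal r *
                    (arcP ρ₁ β₁ (qf (r, z)) ∆ arcP ρ₂ β₂ (qf (r, z))).indicator 1 θ := by
                    apply setLIntegral_mono' measurableSet_Ioo
                    intro θ hθ
                    rw [smul_eq_mul]
                    refine mul_le_mul_right (le_of_eq ?_) _
                    have hi := hmem r θ hr hθ
                    by_cases h : θ ∈ arcP ρ₁ β₁ (qf (r, z)) ∆ arcP ρ₂ β₂ (qf (r, z))
                    · rw [indicator_of_mem h, indicator_of_mem (hi.2 ⟨hm, h⟩)]; rfl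
                    · rw [indicator_of_notMem h, indicator_of_notMem (fun h' => h (hi.1 h').2)]
                _ ≤ ∫⁻ θ, ENNReal.ofReal r *
                    (arcP ρ₁ β₁ (qf (r, z)) ∆ arcP ρ₂ β₂ (qf (r, z))).indicator 1 θ :=
                    setLIntegral_le_lintegral _ _
                _ = ENNReal.ofReal r * volume (arcP ρ₁ β₁ (qf (r, z)) ∆ arcP ρ₂ β₂ (qf (r, z))) := by
                    rw [lintegral_const_mul _ (measurable_one.indicator hms),
                      lintegral_indicator_one hms]
                _ ≤ _ := by
                    simp only [hF]; gcongr
            · rw [hH, indicator_of_notMem hm]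
              rw [nonpos_iff_eq_zero]
              apply setLIntegral_eq_zero measurableSet_Ioo
              intro θ hθ
              simp only
              rw [indicator_of_notMem (fun h' => hm ((hmem r θ hr hθ).1 h').1), smul_zero]
              try rfl
        _ ≤ _ := setLIntegral_le_lintegral _ _
    · apply Measurable.aemeasurable
      have hm2 : Measurable (fun p : ℝ × ℝ => (Prod.mk z ⁻¹' (TT ρ₁ β₁ ∆ TT ρ₂ β₂)).indicator
          (1 : ℝ × ℝ → ℝ≥0∞) (polarCoord.symm p)) :=
        (measurable_one.indicator hTz).comp continuous_polarCoord_symm.measurable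
      exact (ENNReal.measurable_ofReal.comp measurable_fst).mul hm2
  calc volume (TT ρ₁ β₁ ∆ TT ρ₂ β₂) = ∫⁻ z, volume (Prod.mk z ⁻¹' (TT ρ₁ β₁ ∆ TT ρ₂ β₂)) := by
        rw [Measure.volume_eq_prod, Measure.prod_apply hT]
    _ ≤ ∫⁻ z, ∫⁻ r, H (r, z) := lintegral_mono hslice
    _ = ∫⁻ x, H x := by
        rw [Measure.volume_eq_prod, lintegral_prod_symm' _ hHm]
    _ = ∫⁻ x, F x ∂nuM := by
        unfold nuM
        rw [lintegral_withDensity_eq_lintegral_mul _ (by fun_prop) hFm,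
          ← lintegral_indicator measurableSet_halfD]
        rfl
    _ = ENNReal.ofReal (∫ x, (2 * clampR β₂ (kap ρ₂ (qf x)) - 2 * clampR β₁ (kap ρ₁ (qf x))) ∂nuM) := by
        refine (ofReal_integral_eq_lintegral_ofReal
          ((integrable_GF ρ₂ β₂).sub (integrable_GF ρ₁ β₁)) ?_).symm
        filter_upwards [ae_nuM_mem] with x hx
        have := (volume_symmDiff_arcP hρ₁ hρ₂ (qf_pos hx) hβ₁ hβ₂ hd hs).1
        simp only [Pi.zero_apply, Pi.sub_apply]; linarith
    _ = _ := by rw [integral_sub (integrable_GF _ _) (integrable_GF _ _)]; rfl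

lemma exists_mp (b : OrthonormalBasis (Fin 3) ℝ E3) :
    MeasurePreserving (fun x : E3 => ((⟪b 2, x⟫, (⟪b 0, x⟫, ⟪b 1, x⟫)) : ℝ × (ℝ × ℝ))) := by
  have h1 := b.measurePreserving_repr
  have h2 := PiLp.volume_preserving_ofLp (Fin 3)
  have h3 := volume_preserving_piFinSuccAbove (fun _ : Fin 3 => ℝ) 2
  have h4 := (MeasurePreserving.id (volume : Measure ℝ)).prod (volume_preserving_finTwoArrow ℝ)
  have h5 := ((h4.comp h3).comp h2).comp h1
  have e : (fun x : E3 => ((⟪b 2, x⟫, (⟪b 0, x⟫, ⟪b 1, x⟫)) : ℝ × (ℝ × ℝ))) =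
      (((Prod.map id (MeasurableEquiv.finTwoArrow (α := ℝ)) ∘
        MeasurableEquiv.piFinSuccAbove (fun _ : Fin 3 => ℝ) 2) ∘ WithLp.ofLp) ∘ b.repr) := by
    funext x
    have e0 : (b.repr x) 0 = ⟪b 0, x⟫ := b.repr_apply_apply x 0
    have e1 : (b.repr x) 1 = ⟪b 1, x⟫ := b.repr_apply_apply x 1
    have e2 : (b.repr x) 2 = ⟪b 2, x⟫ := b.repr_apply_apply x 2
    rw [← e0, ← e1, ← e2]
    rfl
  rw [e]
  exact h5

lemma preimage_TT (b : OrthonormalBasis (Fin 3) ℝ E3) (ρ β : ℝ) :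
    (fun x : E3 => ((⟪b 2, x⟫, (⟪b 0, x⟫, ⟪b 1, x⟫)) : ℝ × (ℝ × ℝ))) ⁻¹' TT ρ β =
      KK ((ρ * cos β) • b 0 + (ρ * sin β) • b 1) := by
  ext x
  have hn : ⟪b 0, x⟫ ^ 2 + ⟪b 1, x⟫ ^ 2 + ⟪b 2, x⟫ ^ 2 = ‖x‖ ^ 2 := by
    rw [← b.sum_sq_norm_inner_right x]
    simp [Fin.sum_univ_three]
  simp only [mem_preimage, TT, KK, mem_ofPred_eq, hn]
  rw [sqrt_sq (norm_nonneg x), inner_add_right, inner_smul_right, inner_smul_right,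
    real_inner_comm x, real_inner_comm x, sq_lt_one_iff₀ (norm_nonneg x)]
  rw [mul_comm, mul_comm ⟪x, b 1⟫]

open scoped symmDiff in
lemma volume_KK (b : OrthonormalBasis (Fin 3) ℝ E3) {ρ₁ ρ₂ β₁ β₂ : ℝ} (hρ₁ : 0 < ρ₁) (hρ₂ : 0 < ρ₂)
    (hβ₁ : β₁ ∈ Ioo (-(π / 2)) (π / 2)) (hβ₂ : β₂ ∈ Ioo (-(π / 2)) (π / 2))
    (hd : ρ₁ * cos β₁ = ρ₂ * cos β₂) (hs : ρ₁ * sin β₁ ≤ ρ₂ * sin β₂) :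
    volume (KK ((ρ₁ * cos β₁) • b 0 + (ρ₁ * sin β₁) • b 1) ∆
      KK ((ρ₂ * cos β₂) • b 0 + (ρ₂ * sin β₂) • b 1)) ≤ ENNReal.ofReal (GF ρ₂ β₂ - GF ρ₁ β₁) := by
  rw [← preimage_TT, ← preimage_TT, ← Set.preimage_symmDiff,
    (exists_mp b).measure_preimage ((measurableSet_TT _ _).symmDiff
      (measurableSet_TT _ _)).nullMeasurableSet]
  exact volume_TT hρ₁ hρ₂ hβ₁ hβ₂ hd hs

lemma GF_edge_nonneg {ρ₁ ρ₂ β₁ β₂ : ℝ} (hρ₁ : 0 < ρ₁) (hρ₂ : 0 < ρ₂)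
    (hβ₁ : β₁ ∈ Ioo (-(π / 2)) (π / 2)) (hβ₂ : β₂ ∈ Ioo (-(π / 2)) (π / 2))
    (hd : ρ₁ * cos β₁ = ρ₂ * cos β₂) (hs : ρ₁ * sin β₁ ≤ ρ₂ * sin β₂) :
    0 ≤ GF ρ₂ β₂ - GF ρ₁ β₁ := by
  rw [sub_nonneg]
  apply integral_mono_ae (integrable_GF _ _) (integrable_GF _ _)
  filter_upwards [ae_nuM_mem] with x hx
  have := (volume_symmDiff_arcP hρ₁ hρ₂ (qf_pos hx) hβ₁ hβ₂ hd hs).1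
  linarith

lemma mul_cos_arcsin {ρ a : ℝ} (hρ : 0 < ρ) : ρ * cos (arcsin (a / ρ)) = √(ρ ^ 2 - a ^ 2) := by
  rw [cos_arcsin]
  nth_rewrite 1 [← sqrt_sq hρ.le]
  rw [← sqrt_mul (sq_nonneg ρ)]
  congr 1
  field_simp

lemma mul_sin_arcsin {ρ a : ℝ} (hρ : 0 < ρ) (h : 1 ≤ ρ ^ 2 - a ^ 2) :
    ρ * sin (arcsin (a / ρ)) = a := by
  have h1 : |a| ≤ ρ := abs_le_of_sq_le_sq (by linarith) hρ.le
  rw [abs_le] at h1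
  rw [sin_arcsin]
  · field_simp
  · rw [le_div_iff₀ hρ]; linarith
  · rw [div_le_iff₀ hρ]; linarith

lemma arcsin_mem {ρ a : ℝ} (hρ : 0 < ρ) (h : 1 ≤ ρ ^ 2 - a ^ 2) :
    arcsin (a / ρ) ∈ Ioo (-(π / 2)) (π / 2) := by
  have h1 : |a| < ρ := abs_lt_of_sq_lt_sq (by linarith) hρ.le
  rw [abs_lt] at h1
  refine ⟨?_, ?_⟩
  · rw [neg_pi_div_two_lt_arcsin, lt_div_iff₀ hρ]; linarith
  · rw [arcsin_lt_pi_div_two, div_lt_iff₀ hρ]; linarith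

lemma exists_basis {f e : E3} (hf : ‖f‖ = 1) (he : ‖e‖ = 1) (hfe : ⟪f, e⟫ = 0) :
    ∃ b : OrthonormalBasis (Fin 3) ℝ E3, b 0 = f ∧ b 1 = e := by
  have hv : Orthonormal ℝ (({0, 1} : Set (Fin 3)).domRestrict (![f, e, 0] : Fin 3 → E3)) := by
    rw [orthonormal_iff_ite]
    rintro ⟨i, hi⟩ ⟨j, hj⟩
    simp only [mem_insert_iff, mem_singleton_iff] at hi hj
    have hef : ⟪e, f⟫ = 0 := by rw [real_inner_comm, hfe]
    rw [Set.domRestrict_apply, Set.domRestrict_apply]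
    rcases hi with rfl | rfl <;> rcases hj with rfl | rfl <;>
      simp [hf, he, hfe, hef]
  obtain ⟨b, hb⟩ := hv.exists_orthonormalBasis_extension_of_card_eq (by simp)
  exact ⟨b, by simpa using hb 0 (by simp), by simpa using hb 1 (by simp)⟩

open scoped symmDiff in
lemma edge_vol {A B e : E3} (he : ‖e‖ = 1) {l : ℝ} (hl : 0 ≤ l) (hB : B = A + l • e)
    (hd : 1 ≤ ‖A‖ ^ 2 - ⟪A, e⟫ ^ 2) (hd' : 1 ≤ ‖B‖ ^ 2 - ⟪B, e⟫ ^ 2) (hA0 : 0 < ‖A‖) (hB0 : 0 < ‖B‖) :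
    volume (KK A ∆ KK B) ≤ ENNReal.ofReal (GF ‖B‖ (arcsin (⟪B, e⟫ / ‖B‖)) -
      GF ‖A‖ (arcsin (⟪A, e⟫ / ‖A‖))) ∧ 
    0 ≤ GF ‖B‖ (arcsin (⟪B, e⟫ / ‖B‖)) - GF ‖A‖ (arcsin (⟪A, e⟫ / ‖A‖)) := by
  have hee : ⟪e, e⟫ = 1 := by rw [real_inner_self_eq_norm_sq, he]; norm_num
  have hb : ⟪B, e⟫ = ⟪A, e⟫ + l := by
    rw [hB, inner_add_left, real_inner_smul_left, hee, mul_one]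
  have hBn : ‖B‖ ^ 2 - ⟪B, e⟫ ^ 2 = ‖A‖ ^ 2 - ⟪A, e⟫ ^ 2 := by
    rw [hb, hB, norm_add_sq_real, real_inner_smul_right, norm_smul, he, Real.norm_eq_abs, mul_one, sq_abs]
    ring
  have cA := mul_cos_arcsin (a := ⟪A, e⟫) hA0
  have cB := mul_cos_arcsin (a := ⟪B, e⟫) hB0
  have sA := mul_sin_arcsin hA0 hd
  have sB := mul_sin_arcsin hB0 hd'
  rw [hBn] at cB
  set d := √(‖A‖ ^ 2 - ⟪A, e⟫ ^ 2) with hdd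
  have hd1 : 1 ≤ d := by rw [hdd]; exact one_le_sqrt.2 hd
  have hdsq : d ^ 2 = ‖A‖ ^ 2 - ⟪A, e⟫ ^ 2 := sq_sqrt (by linarith)
  have hd0 : 0 < d := by linarith
  have hf : ‖d⁻¹ • (A - ⟪A, e⟫ • e)‖ = 1 := by
    have : ‖A - ⟪A, e⟫ • e‖ ^ 2 = d ^ 2 := by
      rw [norm_sub_sq_real, real_inner_smul_right, norm_smul, he, Real.norm_eq_abs, mul_one, sq_abs, hdsq]
      ring
    have h2 : ‖A - ⟪A, e⟫ • e‖ = d := by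
      rwa [sq_eq_sq₀ (norm_nonneg _) hd0.le] at this
    rw [norm_smul, h2, norm_inv, Real.norm_eq_abs, abs_of_pos hd0, inv_mul_cancel₀ hd0.ne']
  obtain ⟨b, b0, b1⟩ := exists_basis hf he (by
    rw [real_inner_smul_left, inner_sub_left, real_inner_smul_left, hee]; ring)
  have hs : ‖A‖ * sin (arcsin (⟪A, e⟫ / ‖A‖)) ≤ ‖B‖ * sin (arcsin (⟪B, e⟫ / ‖B‖)) := by
    rw [sA, sB, hb]; linarith
  have key := volume_KK b hA0 hB0 (arcsin_mem hA0 hd) (arcsin_mem hB0 hd') (cA.trans cB.symm) hs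
  refine ⟨?_, GF_edge_nonneg hA0 hB0 (arcsin_mem hA0 hd) (arcsin_mem hB0 hd') (cA.trans cB.symm) hs⟩
  have eA : (‖A‖ * cos (arcsin (⟪A, e⟫ / ‖A‖))) • b 0 + (‖A‖ * sin (arcsin (⟪A, e⟫ / ‖A‖))) • b 1 = A := by
    rw [cA, sA, b0, b1, smul_inv_smul₀ hd0.ne']; abel
  have eB : (‖B‖ * cos (arcsin (⟪B, e⟫ / ‖B‖))) • b 0 + (‖B‖ * sin (arcsin (⟪B, e⟫ / ‖B‖))) • b 1 = B := by
    rw [cB, sB, b0, b1, smul_inv_smul₀ hd0.ne', hb, add_smul]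
    refine Eq.trans ?_ hB.symm
    abel
  rwa [eA, eB] at key

lemma exists_trans {n : ℕ} (hn : 0 < n) (S : ℕ → Prop) (hS : ∀ i, S (i + n) ↔ S i)
    {i j : ℕ} (hi : ¬ S i) (hj : S j) : ∃ k < n, ¬ S k ∧ S (k + 1) := by
  by_contra hcon
  push Not at hcon
  have hper : Function.Periodic S n := fun i => propext (hS i)
  have hper1 : Function.Periodic (fun i => S (i + 1)) n := fun i => by
    change S (i + n + 1) = S (i + 1)
    rw [show i + n + 1 = i + 1 + n by ring]; exact propext (hS _)
  have step : ∀ k, ¬ S k → ¬ S (k + 1) := by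
    intro k hk
    have h := hcon (k % n) (Nat.mod_lt _ hn) (by rwa [hper.map_mod_nat])
    have : S (k % n + 1) = S (k + 1) := hper1.map_mod_nat k
    rwa [this] at h
  have all : ∀ k, ¬ S (i + k) := by
    intro k
    induction k with
    | zero => exact hi
    | succ k ih => exact step _ ih
  have h1 := hper.nat_mul i j
  have h2 : i ≤ j + i * n := by nlinarith
  obtain ⟨k, hk⟩ := Nat.exists_eq_add_of_le h2
  apply all k
  rw [← hk]
  have : S (j + i * n) = S j := by simpa using h1
  rwa [this]

lemma measurableSet_KK (A : E3) : MeasurableSet (KK A) := by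
  have : KK A = {x : E3 | ‖x‖ < 1} ∩ {x | ‖x‖ ≤ ⟪x, A⟫} := by ext; simp [KK]
  rw [this]
  exact (measurableSet_lt (by fun_prop) (by fun_prop)).inter
    (measurableSet_le (by fun_prop) (by fun_prop))

open scoped symmDiff in
lemma cover_vol {n : ℕ} (hn : 0 < n) (w : ℕ → E3) (hper : ∀ i, w (i + n) = w i)
    (hcov : ∀ p : E3, ‖p‖ = 1 → ∃ i, 1 ≤ ⟪p, w i⟫) :
    ENNReal.ofReal (8 * π / 3) ≤ ∑ i ∈ Finset.range n, volume (KK (w i) ∆ KK (w (i + 1))) := by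
  have hball : volume (Metric.ball (0 : E3) 1 \ {0}) = ENNReal.ofReal (4 * π / 3) := by
    rw [measure_sdiff_null (by simp), EuclideanSpace.volume_ball_fin_three]
    simp
    try ring_nf
  have hin : ∀ x ∈ Metric.ball (0 : E3) 1 \ {0}, (∃ i, x ∈ KK (w i)) ∧ ∃ i, x ∉ KK (w i) := by
    rintro x ⟨hx1, hx0⟩
    have hx1 : ‖x‖ < 1 := by simpa using hx1
    have hx0 : 0 < ‖x‖ := norm_pos_iff.2 hx0
    have hu : ‖‖x‖⁻¹ • x‖ = 1 := by
      rw [norm_smul, norm_inv, norm_norm, inv_mul_cancel₀ hx0.ne']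
    constructor
    · obtain ⟨i, hi⟩ := hcov _ hu
      refine ⟨i, hx1, ?_⟩
      rw [real_inner_smul_left, ← div_eq_inv_mul, one_le_div hx0] at hi
      exact hi
    · obtain ⟨i, hi⟩ := hcov (-(‖x‖⁻¹ • x)) (by rw [norm_neg, hu])
      refine ⟨i, fun h => ?_⟩
      rw [inner_neg_left, real_inner_smul_left] at hi
      have h2 : 0 < ⟪x, w i⟫ := lt_of_lt_of_le hx0 h.2
      have : 0 < ‖x‖⁻¹ * ⟪x, w i⟫ := by positivity
      linarith
  have h1 : ENNReal.ofReal (4 * π / 3) ≤ ∑ i ∈ Finset.range n, volume (KK (w (i + 1)) \ KK (w i)) := by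
    rw [← hball]
    refine le_trans (measure_mono ?_) (measure_biUnion_finset_le _ _)
    intro x hx
    obtain ⟨⟨j, hj⟩, i, hi⟩ := hin x hx
    obtain ⟨k, hk, h1, h2⟩ := exists_trans hn (fun i => x ∈ KK (w i)) (fun i => by rw [hper]) hi hj
    simp only [Finset.mem_range, mem_iUnion]
    exact ⟨k, hk, h2, h1⟩
  have h2 : ENNReal.ofReal (4 * π / 3) ≤ ∑ i ∈ Finset.range n, volume (KK (w i) \ KK (w (i + 1))) := by
    rw [← hball]
    refine le_trans (measure_mono ?_) (measure_biUnion_finset_le _ _)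
    intro x hx
    obtain ⟨⟨j, hj⟩, i, hi⟩ := hin x hx
    obtain ⟨k, hk, h1, h2⟩ := exists_trans hn (fun i => x ∉ KK (w i)) (fun i => by rw [hper])
      (not_not.2 hj) hi
    simp only [Finset.mem_range, mem_iUnion]
    exact ⟨k, hk, not_not.1 h1, h2⟩
  have e : ENNReal.ofReal (8 * π / 3) = ENNReal.ofReal (4 * π / 3) + ENNReal.ofReal (4 * π / 3) := by
    have := pi_pos
    rw [← ENNReal.ofReal_add (by positivity) (by positivity)]; congr 1; ring
  rw [e]
  refine (add_le_add h2 h1).trans (le_of_eq ?_)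
  rw [← Finset.sum_add_distrib]
  refine Finset.sum_congr rfl fun i _ => ?_
  rw [measure_symmDiff_eq (measurableSet_KK _).nullMeasurableSet (measurableSet_KK _).nullMeasurableSet]

/-- unit direction of the `i`-th edge -/
def ed (w : ℕ → E3) (i : ℕ) : E3 := ‖w (i + 1) - w i‖⁻¹ • (w (i + 1) - w i)

def Sta (w : ℕ → E3) (i : ℕ) : ℝ := ⟪w i, ed w i⟫

def Fst (w : ℕ → E3) (i : ℕ) : ℝ := ⟪w (i + 1), ed w i⟫

def Dsq (w : ℕ → E3) (i : ℕ) : ℝ := ‖w i‖ ^ 2 - Sta w i ^ 2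

section crit
variable {w : ℕ → E3}

lemma norm_ed (hne : ∀ i, w i ≠ w (i + 1)) (i : ℕ) : ‖ed w i‖ = 1 := by
  have : ‖w (i + 1) - w i‖ ≠ 0 := norm_ne_zero_iff.2 (sub_ne_zero.2 (hne i).symm)
  rw [ed, norm_smul, norm_inv, norm_norm, inv_mul_cancel₀ this]

lemma succ_eq (hne : ∀ i, w i ≠ w (i + 1)) (i : ℕ) :
    w (i + 1) = w i + ‖w (i + 1) - w i‖ • ed w i := by
  have : ‖w (i + 1) - w i‖ ≠ 0 := norm_ne_zero_iff.2 (sub_ne_zero.2 (hne i).symm)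
  rw [ed, smul_inv_smul₀ this]; abel

lemma ed_pos (hne : ∀ i, w i ≠ w (i + 1)) (i : ℕ) : 0 < ‖w (i + 1) - w i‖ :=
  norm_pos_iff.2 (sub_ne_zero.2 (hne i).symm)

lemma Fst_eq (hne : ∀ i, w i ≠ w (i + 1)) (i : ℕ) :
    Fst w i = Sta w i + ‖w (i + 1) - w i‖ := by
  have hee : ⟪ed w i, ed w i⟫ = 1 := by rw [real_inner_self_eq_norm_sq, norm_ed hne]; norm_num
  have h : Fst w i - Sta w i = ⟪‖w (i + 1) - w i‖ • ed w i, ed w i⟫ := by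
    rw [Fst, Sta, ← inner_sub_left]; congr 1
    exact sub_eq_of_eq_add' (succ_eq hne i)
  rw [real_inner_smul_left, hee] at h
  linarith

lemma Dsq_eq (hne : ∀ i, w i ≠ w (i + 1)) (i : ℕ) :
    Dsq w i = ‖w (i + 1)‖ ^ 2 - Fst w i ^ 2 := by
  rw [Fst_eq hne, Dsq]
  have : ‖w (i + 1)‖ ^ 2 = ‖w i‖ ^ 2 + 2 * (‖w (i + 1) - w i‖ * Sta w i) + ‖w (i + 1) - w i‖ ^ 2 := by
    conv_lhs => rw [succ_eq hne i]
    rw [norm_add_sq_real, real_inner_smul_right, norm_smul, norm_ed hne, norm_norm, mul_one, Sta]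
  rw [this]; ring

lemma foot (hne : ∀ i, w i ≠ w (i + 1))
    (hedge : ∀ i, ∀ s ∈ Icc (0:ℝ) 1, 1 ≤ ‖w i + s • (w (i + 1) - w i)‖)
    (i : ℕ) (hD : Dsq w i < 1) : 0 < Sta w i ∨ Fst w i < 0 := by
  by_contra! hcon
  obtain ⟨h1, h2⟩ := hcon
  have hl := ed_pos hne i
  have hb := Fst_eq hne i
  have := hedge i (-Sta w i / ‖w (i + 1) - w i‖)
    ⟨div_nonneg (by linarith) hl.le, by rw [div_le_one hl]; linarith⟩
  have e : w i + (-Sta w i / ‖w (i + 1) - w i‖) • (w (i + 1) - w i) = w i - Sta w i • ed w i := by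
    rw [ed, smul_smul, neg_div, neg_smul, ← div_eq_mul_inv]; abel
  rw [e] at this
  have h3 : ‖w i - Sta w i • ed w i‖ ^ 2 = Dsq w i := by
    rw [norm_sub_sq_real, real_inner_smul_right, norm_smul, norm_ed hne, Real.norm_eq_abs, mul_one, sq_abs, Dsq]
    change _ - 2 * (Sta w i * Sta w i) + _ = _
    ring
  nlinarith

lemma Dsq_ge {n : ℕ} (hn : 0 < n) (hper : ∀ i, w (i + n) = w i) (hne : ∀ i, w i ≠ w (i + 1))
    (hedge : ∀ i, ∀ s ∈ Icc (0:ℝ) 1, 1 ≤ ‖w i + s • (w (i + 1) - w i)‖)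
    (hcrit : ∀ i, Sta w (i + 1) ≤ Fst w i) (i : ℕ) : 1 ≤ Dsq w i := by
  by_contra! hD
  rcases foot hne hedge i hD with h | h
  · have hdec : ∀ j, 0 < Sta w j → ‖w j‖ ^ 2 < ‖w (j + 1)‖ ^ 2 := by
      intro j hj
      have h1 := Dsq_eq hne j
      have h2 := Fst_eq hne j
      have h3 := ed_pos hne j
      rw [Dsq] at h1
      nlinarith
    have hstep : ∀ j, (0 < Sta w (j + 1) ∧ Dsq w (j + 1) < 1) → (0 < Sta w j ∧ Dsq w j < 1) := by
      rintro j ⟨h1, h2⟩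
      have h3 := hcrit j
      have h4 := Dsq_eq hne j
      have h5 : Dsq w j < 1 := by
        rw [Dsq] at h2
        nlinarith
      rcases foot hne hedge j h5 with h6 | h6
      · exact ⟨h6, h5⟩
      · linarith
    have hind : ∀ k j, (0 < Sta w (j + k) ∧ Dsq w (j + k) < 1) →
        (0 < Sta w j ∧ Dsq w j < 1) ∧ ‖w j‖ ^ 2 ≤ ‖w (j + k)‖ ^ 2 := by
      intro k
      induction k with
      | zero => intro j hj; exact ⟨hj, le_rfl⟩
      | succ k ih =>
        intro j hj
        have h1 := hstep (j + k) hj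
        have h2 := ih j h1
        exact ⟨h2.1, h2.2.trans (hdec _ h1.1).le⟩
    have hed : ed w (i + n) = ed w i := by
      rw [ed, ed, show i + n + 1 = i + 1 + n by ring, hper, hper]
    have hSn : Sta w (i + n) = Sta w i := by rw [Sta, Sta, hed, hper]
    have hDn : Dsq w (i + n) = Dsq w i := by rw [Dsq, Dsq, hSn, hper]
    have e : i + n = (i + 1) + (n - 1) := by omega
    have h1 := hind (n - 1) (i + 1) (by rw [← e, hSn, hDn]; exact ⟨h, hD⟩)
    rw [← e, hper] at h1
    have := hdec i h
    linarith [h1.2]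
  · have hdec : ∀ j, Fst w j < 0 → ‖w (j + 1)‖ ^ 2 < ‖w j‖ ^ 2 := by
      intro j hj
      have h1 := Dsq_eq hne j
      have h2 := Fst_eq hne j
      have h3 := ed_pos hne j
      rw [Dsq] at h1
      nlinarith
    have hstep : ∀ j, (Fst w j < 0 ∧ Dsq w j < 1) → (Fst w (j + 1) < 0 ∧ Dsq w (j + 1) < 1) := by
      rintro j ⟨h1, h2⟩
      have h3 := hcrit j
      have h4 := Dsq_eq hne j
      have h5 : Dsq w (j + 1) < 1 := by
        rw [Dsq]
        nlinarith
      rcases foot hne hedge (j + 1) h5 with h6 | h6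
      · linarith
      · exact ⟨h6, h5⟩
    have hind : ∀ k j, (Fst w j < 0 ∧ Dsq w j < 1) →
        (Fst w (j + k) < 0 ∧ Dsq w (j + k) < 1) ∧ ‖w (j + k)‖ ^ 2 ≤ ‖w j‖ ^ 2 := by
      intro k
      induction k with
      | zero => intro j hj; exact ⟨hj, le_rfl⟩
      | succ k ih =>
        intro j hj
        have h2 := ih j hj
        exact ⟨hstep (j + k) h2.1, (hdec _ h2.1.1).le.trans h2.2⟩
    have e : i + n = (i + 1) + (n - 1) := by omega
    have h1 := hind (n - 1) (i + 1) (hstep i ⟨h, hD⟩)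
    rw [← e, hper] at h1
    have := hdec i h
    linarith [h1.2]

theorem crit_poly {n : ℕ} (hn : 0 < n) (hper : ∀ i, w (i + n) = w i) (hne : ∀ i, w i ≠ w (i + 1))
    (hcov : ∀ p : E3, ‖p‖ = 1 → ∃ i, 1 ≤ ⟪p, w i⟫)
    (hedge : ∀ i, ∀ s ∈ Icc (0:ℝ) 1, 1 ≤ ‖w i + s • (w (i + 1) - w i)‖)
    (hcrit : ∀ i, Sta w (i + 1) ≤ Fst w i) :
    4 * π ≤ ∑ i ∈ Finset.range n, ‖w (i + 1) - w i‖ := by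
  have hD := Dsq_ge hn hper hne hedge hcrit
  have hn0 : ∀ i, 0 < ‖w i‖ := by
    intro i
    have := hedge i 0 (by simp)
    rw [zero_smul, add_zero] at this
    linarith
  have hD1 : ∀ i, 1 ≤ ‖w i‖ ^ 2 - Sta w i ^ 2 := hD
  have hD2 : ∀ i, 1 ≤ ‖w (i + 1)‖ ^ 2 - Fst w i ^ 2 := fun i => by rw [← Dsq_eq hne]; exact hD i
  set PA : ℕ → ℝ := fun i => PhiF ‖w i‖ (arcsin (Sta w i / ‖w i‖)) with hPA
  set PB : ℕ → ℝ := fun i => PhiF ‖w (i + 1)‖ (arcsin (Fst w i / ‖w (i + 1)‖)) with hPB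
  set X : ℕ → ℝ := fun i => GF ‖w (i + 1)‖ (arcsin (Fst w i / ‖w (i + 1)‖)) -
      GF ‖w i‖ (arcsin (Sta w i / ‖w i‖)) with hX
  have hv := fun i => edge_vol (norm_ed hne i) (ed_pos hne i).le (succ_eq hne i) (hD1 i) (hD2 i)
    (hn0 i) (hn0 (i + 1))
  have h1 := (cover_vol hn w hper hcov).trans (Finset.sum_le_sum fun i _ => (hv i).1)
  rw [← ENNReal.ofReal_sum_of_nonneg (fun i _ => (hv i).2)] at h1
  have h2 : 8 * π / 3 ≤ ∑ i ∈ Finset.range n, X i :=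
    (ENNReal.ofReal_le_ofReal_iff (Finset.sum_nonneg fun i _ => (hv i).2)).1 h1
  have h3 : ∀ i, X i = 2 / 3 * ‖w (i + 1) - w i‖ - (PB i - PA i) := by
    intro i
    simp only [hX, hPA, hPB, PhiF]
    have s1 := mul_sin_arcsin (hn0 i) (hD1 i)
    have s2 := mul_sin_arcsin (hn0 (i + 1)) (hD2 i)
    have := Fst_eq hne i
    rw [mul_assoc, mul_assoc, s1, s2]
    linarith
  have h4 : ∀ i, PA (i + 1) ≤ PB i := by
    intro i
    refine PhiF_mono (hn0 (i + 1)) ?_ (arcsin_mem (hn0 _) (hD1 _)).1 (arcsin_mem (hn0 _) (hD2 _)).2 ?_ ?_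
    · exact arcsin_le_arcsin (div_le_div_of_nonneg_right (hcrit i) (hn0 _).le)
    · rw [mul_cos_arcsin (hn0 _)]; exact one_le_sqrt.2 (hD1 _)
    · rw [mul_cos_arcsin (hn0 _)]; exact one_le_sqrt.2 (hD2 _)
  have h5 : PA n = PA 0 := by
    have e0 : w n = w 0 := by simpa using hper 0
    have e1 : w (n + 1) = w (0 + 1) := by rw [add_comm n 1, hper 1, zero_add]
    simp only [hPA, Sta, ed]
    rw [e1, e0]
  have h6 : ∑ i ∈ Finset.range n, PA i ≤ ∑ i ∈ Finset.range n, PB i := by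
    have a1 := Finset.sum_range_succ PA n
    have a2 := Finset.sum_range_succ' PA n
    have a3 : ∑ i ∈ Finset.range n, PA (i + 1) ≤ ∑ i ∈ Finset.range n, PB i :=
      Finset.sum_le_sum fun i _ => h4 i
    linarith
  rw [Finset.sum_congr rfl fun i _ => h3 i, Finset.sum_sub_distrib, Finset.sum_sub_distrib,
    ← Finset.mul_sum] at h2
  linarith

end crit

/-- admissible closed polygons -/
structure Adm (n : ℕ) (v : ℕ → E3) : Prop where
  per : ∀ i, v (i + n) = v i
  cov : ∀ p : E3, ‖p‖ = 1 → ∃ i, 1 ≤ ⟪p, v i⟫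
  edge : ∀ i, ∀ s ∈ Icc (0:ℝ) 1, 1 ≤ ‖v i + s • (v (i + 1) - v i)‖

lemma sum_shift {n : ℕ} (g : ℕ → ℝ) (hg : ∀ i, g (i + n) = g i) (c : ℕ) :
    ∑ i ∈ Finset.range n, g (i + c) = ∑ i ∈ Finset.range n, g i := by
  induction c with
  | zero => rfl
  | succ c ih =>
    rw [← ih]
    have a1 := Finset.sum_range_succ (fun i => g (i + c)) n
    have a2 := Finset.sum_range_succ' (fun i => g (i + c)) n
    have a3 : g (n + c) = g (0 + c) := by rw [add_comm n c, hg, zero_add]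
    have a4 : ∑ i ∈ Finset.range n, g (i + (c + 1)) = ∑ i ∈ Finset.range n, g (i + 1 + c) :=
      Finset.sum_congr rfl fun i _ => by congr 1; ring
    rw [a4]; linarith

lemma mod_per {α : Type*} {n : ℕ} {v : ℕ → α} (h : ∀ i, v (i + n) = v i) (i : ℕ) : v (i % n) = v i :=
  Function.Periodic.map_mod_nat h i

lemma norm_sub_le_perim {n : ℕ} (hn : 0 < n) {v : ℕ → E3} (h : ∀ i, v (i + n) = v i) (i j : ℕ) :
    ‖v i - v j‖ ≤ ∑ i ∈ Finset.range n, ‖v (i + 1) - v i‖ := by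
  have key : ∀ i j, i ≤ j → j < n → ‖v i - v j‖ ≤ ∑ i ∈ Finset.range n, ‖v (i + 1) - v i‖ := by
    intro i j hij hj
    rw [← dist_eq_norm]
    refine (dist_le_Ico_sum_dist v hij).trans ?_
    refine (Finset.sum_le_sum_of_subset_of_nonneg (t := Finset.range n) ?_ ?_).trans ?_
    · intro x hx; simp at hx ⊢; omega
    · intros; positivity
    · refine Finset.sum_le_sum fun i _ => ?_
      rw [dist_comm, dist_eq_norm]
  rw [← mod_per h i, ← mod_per h j]
  rcases le_total (i % n) (j % n) with hh | hh
  · exact key _ _ hh (Nat.mod_lt _ hn)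
  · rw [norm_sub_rev]; exact key _ _ hh (Nat.mod_lt _ hn)

lemma first_var_aux {x A : E3} (hA : x ≠ A) (ε : ℝ) :
    ‖(1 + ε) • x - A‖ ≤ ‖x - A‖ + ε * (⟪x, x - A⟫ / ‖x - A‖) + ε ^ 2 * (‖x‖ ^ 2 / (2 * ‖x - A‖)) := by
  have hu : 0 < ‖x - A‖ := norm_pos_iff.2 (sub_ne_zero.2 hA)
  have e : (1 + ε) • x - A = (x - A) + ε • x := by rw [add_smul, one_smul]; abel
  have h2 : ‖(1 + ε) • x - A‖ ^ 2 = ‖x - A‖ ^ 2 + 2 * (ε * ⟪x, x - A⟫) + ε ^ 2 * ‖x‖ ^ 2 := by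
    rw [e, norm_add_sq_real, real_inner_smul_right, norm_smul, Real.norm_eq_abs, mul_pow, sq_abs,
      real_inner_comm]
  have h3 : ‖x - A‖ + ε * (⟪x, x - A⟫ / ‖x - A‖) + ε ^ 2 * (‖x‖ ^ 2 / (2 * ‖x - A‖)) =
    (‖x - A‖ ^ 2 + ‖(1 + ε) • x - A‖ ^ 2) / (2 * ‖x - A‖) := by
    rw [h2]; field_simp; ring
  rw [h3, le_div_iff₀ (by positivity)]
  nlinarith [sq_nonneg (‖x - A‖ - ‖(1 + ε) • x - A‖)]

lemma first_var {x A C : E3} (hA : x ≠ A) (hC : x ≠ C) {δ : ℝ} (hδ : 0 < δ)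
    (h : ∀ ε ∈ Ioo 0 δ, ‖x - A‖ + ‖x - C‖ ≤ ‖(1 + ε) • x - A‖ + ‖(1 + ε) • x - C‖) :
    0 ≤ ⟪x, x - A⟫ / ‖x - A‖ + ⟪x, x - C⟫ / ‖x - C‖ := by
  by_contra! hneg
  set S := ⟪x, x - A⟫ / ‖x - A‖ + ⟪x, x - C⟫ / ‖x - C‖ with hS
  set K := ‖x‖ ^ 2 / (2 * ‖x - A‖) + ‖x‖ ^ 2 / (2 * ‖x - C‖) with hK
  have hK0 : 0 ≤ K := by positivity
  have h1 : ∀ ε ∈ Ioo 0 δ, 0 ≤ S + ε * K := by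
    intro ε hε
    have := h ε hε
    have a := first_var_aux hA ε
    have b := first_var_aux hC ε
    have : 0 ≤ ε * (S + ε * K) := by rw [hS, hK]; nlinarith
    exact nonneg_of_mul_nonneg_right this hε.1
  have h2 := h1 (min (δ / 2) (-S / (2 * (K + 1)))) ⟨lt_min (by linarith) (by apply div_pos <;> linarith),
    lt_of_le_of_lt (min_le_left _ _) (by linarith)⟩
  have h3 : min (δ / 2) (-S / (2 * (K + 1))) * K ≤ -S / (2 * (K + 1)) * K :=
    mul_le_mul_of_nonneg_right (min_le_right _ _) hK0
  have h4 : -S / (2 * (K + 1)) * K ≤ -S / 2 := by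
    rw [div_mul_eq_mul_div, div_le_div_iff₀ (by linarith) (by norm_num)]
    nlinarith
  linarith

lemma exists_unit : ∃ p : E3, ‖p‖ = 1 := ⟨EuclideanSpace.single 0 1, by simp⟩

lemma Adm.ne_one {v : ℕ → E3} (h : Adm 1 v) : False := by
  obtain ⟨p, hp⟩ := exists_unit
  have hv : ∀ i, v i = v 0 := by
    intro i
    induction i with
    | zero => rfl
    | succ i ih => rw [h.per, ih]
  obtain ⟨i, hi⟩ := h.cov p hp
  obtain ⟨j, hj⟩ := h.cov (-p) (by rwa [norm_neg])
  rw [hv] at hi hj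
  rw [inner_neg_left] at hj
  linarith

lemma Adm.drop {n : ℕ} (hn : 0 < n) {w : ℕ → E3} (h : Adm (n + 1) w) {k : ℕ} (hk : w k = w (k + 1)) :
    ∃ u, Adm n u ∧ ∑ i ∈ Finset.range n, ‖u (i + 1) - u i‖ =
      ∑ i ∈ Finset.range (n + 1), ‖w (i + 1) - w i‖ := by
  set w' : ℕ → E3 := fun j => w (j + (k + 1)) with hw'
  have hp' : ∀ j, w' (j + (n + 1)) = w' j := by
    intro j; simp only [hw']; rw [← h.per (j + (k + 1))]; congr 1; ring
  have hz : w' n = w' 0 := by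
    simp only [hw']
    rw [show n + (k + 1) = k + (n + 1) by ring, h.per, hk, zero_add]
  have hsucc : ∀ j, w' ((j + 1) % n) = w' (j % n + 1) := by
    intro j
    have hlt := Nat.mod_lt j hn
    rw [Nat.add_mod]
    rcases Nat.lt_or_ge (j % n + 1) n with h1 | h1
    · congr 1
      rw [← Nat.add_mod]
      rw [← Nat.mod_add_mod, Nat.mod_eq_of_lt h1]
    · have h2 : j % n + 1 = n := by omega
      rw [← Nat.add_mod, ← Nat.mod_add_mod, h2, Nat.mod_self, hz]
  refine ⟨fun j => w' (j % n), ⟨?_, ?_, ?_⟩, ?_⟩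
  · intro i; simp
  · intro p hp
    obtain ⟨i, hi⟩ := h.cov p hp
    have hj : w' (i + n * (k + 1)) = w i := by
      simp only [hw']
      have := Function.Periodic.nat_mul h.per (k + 1) i
      rw [← this]; congr 1; simp; ring
    rw [← hj, ← mod_per hp'] at hi
    have hlt : (i + n * (k + 1)) % (n + 1) < n + 1 := Nat.mod_lt _ (Nat.succ_pos n)
    rcases Nat.lt_or_ge ((i + n * (k + 1)) % (n + 1)) n with h1 | h1
    · exact ⟨_, by rwa [Nat.mod_eq_of_lt h1]⟩
    · have h2 : (i + n * (k + 1)) % (n + 1) = n := by omega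
      rw [h2, hz] at hi
      exact ⟨0, by simpa using hi⟩
  · intro i s hs
    rw [hsucc]
    have := h.edge (i % n + (k + 1)) s hs
    simp only [hw']
    rwa [show i % n + 1 + (k + 1) = i % n + (k + 1) + 1 by ring]
  · have e1 : ∑ i ∈ Finset.range n, ‖w' ((i + 1) % n) - w' (i % n)‖ =
        ∑ i ∈ Finset.range n, ‖w' (i + 1) - w' i‖ := by
      refine Finset.sum_congr rfl fun i hi => ?_
      rw [hsucc, Nat.mod_eq_of_lt (Finset.mem_range.1 hi)]
    have e2 : ∑ i ∈ Finset.range (n + 1), ‖w' (i + 1) - w' i‖ =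
        ∑ i ∈ Finset.range n, ‖w' (i + 1) - w' i‖ := by
      rw [Finset.sum_range_succ]
      have : w' (n + 1) = w' n := by rw [hz]; simpa using hp' 0
      rw [this, sub_self, norm_zero, add_zero]
    rw [e1, ← e2]
    have := sum_shift (n := n + 1) (fun i => ‖w (i + 1) - w i‖) (fun i => by
      rw [h.per, show i + (n + 1) + 1 = i + 1 + (n + 1) by ring, h.per]) (k + 1)
    rw [← this]
    refine Finset.sum_congr rfl fun i hi => ?_
    simp only [hw']
    rw [show i + 1 + (k + 1) = i + (k + 1) + 1 by ring]

lemma Adm.scale {n : ℕ} {v : ℕ → E3} (h : Adm n v) (l : ℕ → ℝ) (hl : ∀ i, 1 ≤ l i) :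
    Adm n (fun i => l (i % n) • v i) := by
  refine ⟨?_, ?_, ?_⟩
  · intro i; simp [h.per]
  · intro p hp
    obtain ⟨i, hi⟩ := h.cov p hp
    refine ⟨i, ?_⟩
    rw [real_inner_smul_right]
    nlinarith [hl (i % n)]
  · intro i s hs
    set a := l (i % n)
    set b := l ((i + 1) % n)
    have ha : 1 ≤ a := hl _
    have hb : 1 ≤ b := hl _
    obtain ⟨hs0, hs1⟩ := hs
    have hc : 1 ≤ (1 - s) * a + s * b := by nlinarith
    set c := (1 - s) * a + s * b with hcd
    have hc0 : 0 < c := by linarith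
    have e : a • v i + s • (b • v (i + 1) - a • v i) = c • (v i + (s * b / c) • (v (i + 1) - v i)) := by
      rw [smul_add, smul_smul, mul_div_cancel₀ _ hc0.ne', hcd]
      module
    have h1 := h.edge i (s * b / c) ⟨by positivity, by
      rw [div_le_one hc0, hcd]; nlinarith⟩
    rw [e, norm_smul, Real.norm_eq_abs, abs_of_pos hc0]
    nlinarith

theorem poly (n : ℕ) (hn : 0 < n) (v : ℕ → E3) (hv : Adm n v) :
    4 * π ≤ ∑ i ∈ Finset.range n, ‖v (i + 1) - v i‖ := by
  induction n, hn using Nat.le_induction generalizing v with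
  | base => exact hv.ne_one.elim
  | succ m hm ih =>
  have hm : 0 < m := hm
  set n := m + 1 with hn_def
  have hn : 0 < n := by omega
  have hn2 : 2 ≤ n := by omega
  set W : (ℕ → ℝ) → ℕ → E3 := fun l i => l (i % n) • v i with hW
  set f : (ℕ → ℝ) → ℝ := fun l => ∑ i ∈ Finset.range n, ‖W l (i + 1) - W l i‖ with hf
  set L0 := ∑ i ∈ Finset.range n, ‖v (i + 1) - v i‖ with hL0
  have hf1 : f (fun _ => 1) = L0 := by simp [hf, hW, hL0]
  have hL0n : 0 ≤ L0 := Finset.sum_nonneg fun _ _ => norm_nonneg _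
  set R := L0 + 1 with hR
  have hbox : IsCompact (Set.pi univ (fun _ : ℕ => Icc (1:ℝ) R)) :=
    isCompact_univ_pi fun _ => isCompact_Icc
  have h1box : (fun _ => 1 : ℕ → ℝ) ∈ Set.pi univ (fun _ : ℕ => Icc (1:ℝ) R) := by
    intro i _; exact ⟨le_rfl, by linarith⟩
  have hfc : Continuous f := by
    simp only [hf, hW]
    fun_prop
  obtain ⟨l, hl, hmin⟩ := hbox.exists_isMinOn ⟨_, h1box⟩ hfc.continuousOn
  have hmin : ∀ l' ∈ Set.pi univ (fun _ : ℕ => Icc (1:ℝ) R), f l ≤ f l' := fun l' h => hmin h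
  have hl1 : ∀ i, 1 ≤ l i := fun i => (hl i (mem_univ _)).1
  have hAdm : Adm n (W l) := hv.scale l hl1
  have hfl : f l ≤ L0 := (hmin _ h1box).trans_eq hf1
  set w := W l with hw
  have hwn : ∀ i, 1 ≤ ‖w i‖ := fun i => by simpa using hAdm.edge i 0 (by simp)
  have hvn : ∀ i, 1 ≤ ‖v i‖ := fun i => by simpa using hv.edge i 0 (by simp)
  have hbd : ∀ i, ‖w i‖ ≤ L0 := by
    intro i
    have h0 : 0 < ‖w i‖ := by linarith [hwn i]
    obtain ⟨j, hj⟩ := hAdm.cov (-(‖w i‖⁻¹ • w i)) (by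
      rw [norm_neg, norm_smul, norm_inv, norm_norm, inv_mul_cancel₀ h0.ne'])
    have h1 := norm_sub_le_perim hn hAdm.per i j
    have h2 : ⟪‖w i‖⁻¹ • w i, w i - w j⟫ ≤ ‖w i - w j‖ := by
      refine (real_inner_le_norm _ _).trans (le_of_eq ?_)
      rw [norm_smul, norm_inv, norm_norm, inv_mul_cancel₀ h0.ne', one_mul]
    have h3 : ⟪‖w i‖⁻¹ • w i, w i⟫ = ‖w i‖ := by
      rw [real_inner_smul_left, real_inner_self_eq_norm_sq]; field_simp
    rw [inner_sub_right, h3] at h2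
    rw [inner_neg_left] at hj
    have h4 : ∑ i ∈ Finset.range n, ‖w (i + 1) - w i‖ ≤ L0 := hfl
    linarith
  suffices h : 4 * π ≤ f l by exact h.trans hfl
  by_cases hdup : ∃ k, w k = w (k + 1)
  · obtain ⟨k, hk⟩ := hdup
    obtain ⟨u, hu, hsum⟩ := hAdm.drop hm hk
    have := ih u hu
    rw [hsum] at this
    exact this
  push Not at hdup
  refine crit_poly hn hAdm.per hdup hAdm.cov hAdm.edge ?_
  have hper := hAdm.per
  have hedp : ∀ i, ed w (i + n) = ed w i := fun i => by
    rw [ed, ed, show i + n + 1 = i + 1 + n by ring, hper, hper]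
  have hStp : ∀ i, Sta w (i + n) = Sta w i := fun i => by rw [Sta, Sta, hedp, hper]
  have hFsp : ∀ i, Fst w (i + n) = Fst w i := fun i => by
    rw [Fst, Fst, hedp, show i + n + 1 = i + 1 + n by ring, hper]
  intro i
  rw [← mod_per hFsp i, ← mod_per hStp (i + 1), ← Nat.mod_add_mod]
  obtain ⟨i0, hi0⟩ : ∃ i0, i0 = i % n := ⟨_, rfl⟩
  have hi0n : i0 < n := hi0 ▸ Nat.mod_lt _ hn
  rw [← hi0]
  obtain ⟨k, hk⟩ : ∃ k, k = (i0 + 1) % n := ⟨_, rfl⟩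
  have hkn : k < n := hk ▸ Nat.mod_lt _ hn
  rw [← hk]
  have hwk : w (i0 + 1) = w k := by rw [hk, mod_per hper]
  have hik : i0 ≠ k := by
    intro h
    rcases Nat.lt_or_ge (i0 + 1) n with h1 | h1
    · rw [Nat.mod_eq_of_lt h1] at hk; omega
    · have : i0 + 1 = n := by omega
      rw [this, Nat.mod_self] at hk; omega
  have hk1 : (k + 1) % n ≠ k := by
    intro h
    rcases Nat.lt_or_ge (k + 1) n with h1 | h1
    · rw [Nat.mod_eq_of_lt h1] at h; omega
    · have : k + 1 = n := by omega
      rw [this, Nat.mod_self] at h; omega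
  have hinj : ∀ j, j < n → (j + 1) % n = k → j = i0 := by
    intro j hj h
    rw [hk] at h
    have := Nat.ModEq.add_right_cancel' 1 h
    rwa [Nat.ModEq, Nat.mod_eq_of_lt hj, Nat.mod_eq_of_lt hi0n] at this
  have hA : w k ≠ w i0 := fun h => hdup i0 (by rw [hwk, h])
  have hC : w k ≠ w (k + 1) := hdup k
  have hlk : l k < R := by
    have h1 := hbd k
    have h2 : ‖w k‖ = l k * ‖v k‖ := by
      simp only [hw, hW]
      rw [Nat.mod_eq_of_lt hkn, norm_smul, Real.norm_eq_abs, abs_of_pos (by linarith [hl1 k])]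
    nlinarith [hvn k, hl1 k]
  have hfv := first_var hA hC (δ := (R - l k) / l k) (div_pos (by linarith) (by linarith [hl1 k])) (by
    intro ε hε
    have hlk0 : 0 < l k := by linarith [hl1 k]
    have hε2 := hε.2
    have hε1 := hε.1
    rw [lt_div_iff₀ hlk0] at hε2
    set l' := Function.update l k ((1 + ε) * l k) with hl'
    have hl'k : l' k = (1 + ε) * l k := by simp [hl']
    have hl'o : ∀ j, j ≠ k → l' j = l j := fun j hj => by simp [hl', hj]
    have hl'b : l' ∈ Set.pi univ (fun _ : ℕ => Icc (1:ℝ) R) := by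
      intro j _
      by_cases hj : j = k
      · rw [hj, hl'k]
        constructor
        · nlinarith [hl1 k]
        · linarith
      · rw [hl'o j hj]; exact hl j (mem_univ _)
    have hWk : ∀ j, j % n = k → W l' j = (1 + ε) • w j := by
      intro j hj
      simp only [hw, hW]
      rw [hj, hl'k, smul_smul]
    have hWo : ∀ j, j % n ≠ k → W l' j = w j := by
      intro j hj
      simp only [hw, hW]
      rw [hl'o _ hj]
    have h0 := hmin l' hl'b
    have h1 : 0 ≤ ∑ j ∈ Finset.range n, (‖W l' (j + 1) - W l' j‖ - ‖w (j + 1) - w j‖) := by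
      rw [Finset.sum_sub_distrib]
      exact sub_nonneg.2 h0
    rw [Finset.sum_eq_add_of_mem i0 k (Finset.mem_range.2 hi0n) (Finset.mem_range.2 hkn) hik] at h1
    · rw [hWk (i0 + 1) hk.symm, hWo i0 (by rwa [Nat.mod_eq_of_lt hi0n]), hWo (k + 1) hk1,
        hWk k (Nat.mod_eq_of_lt hkn), hwk, norm_sub_rev (w (k + 1)), norm_sub_rev (w (k + 1))] at h1
      linarith
    · rintro j hj ⟨hj1, hj2⟩
      have hjn := Finset.mem_range.1 hj
      rw [hWo j (by rwa [Nat.mod_eq_of_lt hjn]), hWo (j + 1) (fun h => hj1 (hinj j hjn h)), sub_self])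
  have e1 : Fst w i0 = ⟪w k, w k - w i0⟫ / ‖w k - w i0‖ := by
    rw [Fst, ed, hwk, real_inner_smul_right, div_eq_inv_mul]
  have e2 : Sta w k = - (⟪w k, w k - w (k + 1)⟫ / ‖w k - w (k + 1)‖) := by
    rw [Sta, ed, real_inner_smul_right, div_eq_inv_mul, norm_sub_rev (w (k + 1)),
      ← neg_sub (w k) (w (k + 1)), inner_neg_right]
    ring
  rw [e1, e2]
  linarith

lemma approx_bound
    (a b : ℝ) (hab : a < b) (γ : ℝ → E3)
    (hcont : ContinuousOn γ (Set.Icc a b))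
    (hclosed : γ a = γ b)
    (hrect : eVariationOn γ (Set.Icc a b) ≠ ⊤)
    (x : E3) (r : ℝ) (hr : 0 < r)
    (hhull : Metric.sphere x r ⊆ convexHull ℝ (γ '' Set.Icc a b))
    (hout : ∀ t ∈ Set.Icc a b, r ≤ dist (γ t) x) {ε : ℝ} (hε0 : 0 < ε) (hε1 : ε < 1) :
    4 * π * (r * (1 - ε)) ≤ (eVariationOn γ (Set.Icc a b)).toReal := by
  have huc := isCompact_Icc.uniformContinuousOn_of_continuous hcont
  rw [Metric.uniformContinuousOn_iff] at huc
  obtain ⟨δ, hδ, huc⟩ := huc (ε * r) (by positivity)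
  obtain ⟨N, hN⟩ := exists_nat_gt ((b - a) / δ)
  have hba : 0 < b - a := by linarith
  have hNR : (0:ℝ) < N := lt_trans (by positivity) hN
  have hN0 : 0 < N := by exact_mod_cast hNR
  have hstep : (b - a) / N < δ := by
    rw [div_lt_iff₀ hδ] at hN
    rw [div_lt_iff₀ hNR]; linarith
  set t : ℕ → ℝ := fun i => a + (b - a) / N * (min i N : ℕ) with ht
  have htm : Monotone t := by
    intro i j hij
    simp only [ht]
    have : ((min i N : ℕ) : ℝ) ≤ (min j N : ℕ) := by exact_mod_cast min_le_min_right N hij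
    have h2 : 0 ≤ (b - a) / N := by positivity
    nlinarith
  have ht0 : t 0 = a := by simp [ht]
  have htN : t N = b := by simp [ht]; field_simp; ring
  have htI : ∀ i, t i ∈ Icc a b := by
    intro i
    refine ⟨by rw [← ht0]; exact htm (Nat.zero_le _), ?_⟩
    have h1 : t i ≤ t (max i N) := htm (le_max_left _ _)
    have h2 : t (max i N) = t N := by simp [ht]
    rwa [h2, htN] at h1
  have hdist : ∀ i, dist (γ (t (i + 1))) (γ (t i)) < ε * r := by
    intro i
    refine huc _ (htI _) _ (htI _) (lt_of_le_of_lt ?_ hstep)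
    rw [Real.dist_eq, abs_of_nonneg (sub_nonneg.2 (htm (Nat.le_succ i)))]
    simp only [ht]
    have h1 : ((min (i + 1) N : ℕ) : ℝ) ≤ (min i N : ℕ) + 1 := by
      have : min (i + 1) N ≤ min i N + 1 := by omega
      exact_mod_cast this
    have h2 : 0 ≤ (b - a) / N := by positivity
    nlinarith
  set c := (r * (1 - ε))⁻¹ with hc
  have hre : 0 < r * (1 - ε) := mul_pos hr (by linarith)
  have hc0 : 0 < c := inv_pos.2 hre
  have hcr : c * (r * (1 - ε)) = 1 := inv_mul_cancel₀ hre.ne'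
  set v : ℕ → E3 := fun i => c • (γ (t (i % N)) - x) with hv
  have hwrap : ∀ q ≤ N, γ (t (q % N)) = γ (t q) := by
    intro q hq
    rcases hq.lt_or_eq with h | h
    · rw [Nat.mod_eq_of_lt h]
    · rw [h, Nat.mod_self, ht0, htN, hclosed]
  have hsucc : ∀ i, γ (t ((i + 1) % N)) = γ (t (i % N + 1)) := by
    intro i
    rw [← Nat.mod_add_mod]
    exact hwrap _ (Nat.mod_lt _ hN0)
  have hdiff : ∀ i, v (i + 1) - v i = c • (γ (t (i % N + 1)) - γ (t (i % N))) := by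
    intro i
    simp only [hv]
    rw [hsucc, ← smul_sub]; congr 1; abel
  have hAdm : Adm N v := by
    refine ⟨?_, ?_, ?_⟩
    · intro i; simp [hv]
    · intro p hp
      have hex : ∃ s ∈ Icc a b, r ≤ ⟪p, γ s - x⟫ := by
        by_contra! hcon
        have hsub : convexHull ℝ (γ '' Set.Icc a b) ⊆ {y | (innerₛₗ ℝ p) y < r + ⟪p, x⟫} := by
          apply convexHull_min
          · rintro _ ⟨s, hs, rfl⟩
            have := hcon s hs
            rw [inner_sub_right] at this
            change ⟪p, γ s⟫ < _
            linarith
          · exact convex_halfSpace_lt (innerₛₗ ℝ p).isLinear _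
        have hmem : x + r • p ∈ Metric.sphere x r := by
          simp [norm_smul, hp, abs_of_pos hr]
        have h1 := hsub (hhull hmem)
        change ⟪p, x + r • p⟫ < _ at h1
        rw [inner_add_right, real_inner_smul_right, real_inner_self_eq_norm_sq, hp] at h1
        linarith
      obtain ⟨s, hs, hsr⟩ := hex
      set y := (s - a) / ((b - a) / N) with hy
      have hq0 : 0 < (b - a) / N := by positivity
      have hy0 : 0 ≤ y := div_nonneg (by linarith [hs.1]) hq0.le
      have hys : s = a + (b - a) / N * y := by rw [hy, mul_div_cancel₀ _ hq0.ne']; ring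
      have hyN : y ≤ N := by
        rw [hy, div_le_iff₀ hq0, mul_div_cancel₀ _ hNR.ne']; linarith [hs.2]
      set q := ⌊y⌋₊ with hq
      have hqN : q ≤ N := Nat.floor_le_of_le hyN
      have h1 : (q:ℝ) ≤ y := Nat.floor_le hy0
      have h2 : y < q + 1 := Nat.lt_floor_add_one y
      have htq : t q = a + (b - a) / N * q := by simp only [ht]; rw [min_eq_left hqN]
      have hd : dist (γ s) (γ (t q)) < ε * r := by
        refine huc _ hs _ (htI _) (lt_of_le_of_lt ?_ hstep)
        rw [Real.dist_eq, htq, hys, abs_of_nonneg (by nlinarith)]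
        nlinarith
      refine ⟨q, ?_⟩
      simp only [hv]
      rw [hwrap q hqN, real_inner_smul_right, ← hcr]
      refine mul_le_mul_of_nonneg_left ?_ hc0.le
      have h3 : ⟪p, γ s - γ (t q)⟫ ≤ dist (γ s) (γ (t q)) := by
        refine (real_inner_le_norm _ _).trans (le_of_eq ?_)
        rw [hp, one_mul, dist_eq_norm]
      have h4 : γ s - γ (t q) = (γ s - x) - (γ (t q) - x) := by abel
      rw [h4, inner_sub_right] at h3
      linarith
    · intro i s hs
      rw [hdiff]
      simp only [hv]
      rw [smul_comm s c, ← smul_add, norm_smul, Real.norm_eq_abs, abs_of_pos hc0, ← hcr]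
      refine mul_le_mul_of_nonneg_left ?_ hc0.le
      have h1 := hout _ (htI (i % N))
      rw [dist_eq_norm] at h1
      have h2 := hdist (i % N)
      rw [dist_eq_norm] at h2
      have h3 := norm_sub_le_norm_add (γ (t (i % N)) - x) (s • (γ (t (i % N + 1)) - γ (t (i % N))))
      rw [norm_smul, Real.norm_eq_abs, abs_of_nonneg hs.1] at h3
      have h4 : s * ‖γ (t (i % N + 1)) - γ (t (i % N))‖ ≤ 1 * (ε * r) :=
        mul_le_mul hs.2 h2.le (norm_nonneg _) zero_le_one
      linarith
  have hp := poly N hN0 v hAdm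
  have hsum : ∑ i ∈ Finset.range N, ‖v (i + 1) - v i‖ =
      c * ∑ i ∈ Finset.range N, dist (γ (t (i + 1))) (γ (t i)) := by
    rw [Finset.mul_sum]
    refine Finset.sum_congr rfl fun i hi => ?_
    rw [hdiff, norm_smul, Real.norm_eq_abs, abs_of_pos hc0, dist_eq_norm,
      Nat.mod_eq_of_lt (Finset.mem_range.1 hi)]
  have hvar : ∑ i ∈ Finset.range N, dist (γ (t (i + 1))) (γ (t i)) ≤
      (eVariationOn γ (Set.Icc a b)).toReal := by
    rw [← ENNReal.ofReal_le_iff_le_toReal hrect, ENNReal.ofReal_sum_of_nonneg (fun _ _ => dist_nonneg)]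
    simp_rw [← edist_dist]
    exact eVariationOn.sum_le htm (fun i => htI i)
  rw [hsum] at hp
  have h1 : c * (4 * π * (r * (1 - ε))) ≤ c * (eVariationOn γ (Set.Icc a b)).toReal := by
    have h2 := mul_le_mul_of_nonneg_left hvar hc0.le
    have h3 : c * (4 * π * (r * (1 - ε))) = 4 * π * (c * (r * (1 - ε))) := by ring
    rw [h3, hcr]
    linarith
  exact le_of_mul_le_mul_left h1 hc0


/-- **Zalgaller's sphere inspection inequality.** If a closed rectifiable curve
`γ : [a,b] → ℝ³` lies outside the sphere of radius `r` centered at `x` and contains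
that sphere in its convex hull, then its length is at least `4πr`. -/
theorem length_ge_four_pi_r_of_inspects_sphere
    (a b : ℝ) (hab : a < b) (γ : ℝ → E3)
    (hcont : ContinuousOn γ (Set.Icc a b))
    (hclosed : γ a = γ b)
    (hrect : eVariationOn γ (Set.Icc a b) ≠ ⊤)
    (x : E3) (r : ℝ) (hr : 0 < r)
    (hhull : Metric.sphere x r ⊆ convexHull ℝ (γ '' Set.Icc a b))
    (hout : ∀ t ∈ Set.Icc a b, r ≤ dist (γ t) x) :
    4 * π * r ≤ (eVariationOn γ (Set.Icc a b)).toReal := by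
  have h : ∀ ε ∈ Set.Ioo (0:ℝ) 1,
      4 * π * (r * (1 - ε)) ≤ (eVariationOn γ (Set.Icc a b)).toReal := fun ε hε =>
    approx_bound a b hab γ hcont hclosed hrect x r hr hhull hout hε.1 hε.2
  by_contra! hcon
  have hπ := pi_pos
  have hP : 0 < 4 * π * r := by positivity
  set L := (eVariationOn γ (Set.Icc a b)).toReal with hL
  have hL0 : 0 ≤ L := ENNReal.toReal_nonneg
  have h1 := h ((4 * π * r - L) / (2 * (4 * π * r)))
    ⟨div_pos (by linarith) (by linarith), by rw [div_lt_one (by linarith)]; linarith⟩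
  have h2 : 4 * π * (r * (1 - (4 * π * r - L) / (2 * (4 * π * r)))) =
      4 * π * r - (4 * π * r - L) / 2 := by
    field_simp
  rw [h2] at h1
  linarith
end
end

section
/- There exists a closed rectifiable curve γ : [0,1] → ℝ³ with S² contained in the convex hull of γ([0,1]) whose length is minimal, i.e. L(γ) ≤ L(β) for every closed rectifiable curve β : [0,1] → ℝ³ with S² contained in the convex hull of β([0,1]). -/
open MeasureTheory Set Real
open scoped ENNReal NNReal RealInnerProductSpace

noncomputable section

/-- A closed rectifiable curve on `[a,b]` whose convex hull contains the unit sphere. -/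
def IsInspection (a b : ℝ) (γ : ℝ → E3) : Prop :=
  ContinuousOn γ (Set.Icc a b) ∧ γ a = γ b ∧ eVariationOn γ (Set.Icc a b) ≠ ⊤ ∧
    Metric.sphere (0 : E3) 1 ⊆ convexHull ℝ (γ '' Set.Icc a b)

/-- Carathéodory's theorem in `E3`, with four points. -/
theorem caratheodory_fin {S : Set E3} {x : E3} (hx : x ∈ convexHull ℝ S) :
    ∃ (w : Fin 4 → ℝ) (z : Fin 4 → E3), (∀ i, 0 ≤ w i) ∧ ∑ i, w i = 1 ∧
      (∀ i, z i ∈ S) ∧ ∑ i, w i • z i = x := by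
  obtain ⟨p, hp⟩ : S.Nonempty := convexHull_nonempty_iff.1 ⟨x, hx⟩
  obtain ⟨ι, _, z, w, hz, hind, hw, hw1, hsum⟩ := eq_pos_convex_span_of_mem_convexHull hx
  have hcard : Fintype.card ι ≤ Fintype.card (Fin 4) := by
    have h1 := hind.card_le_finrank_succ
    have h2 := Submodule.finrank_le (vectorSpan ℝ (range z))
    have h3 : Module.finrank ℝ E3 = 3 := by simp
    rw [Fintype.card_fin]
    omega
  obtain ⟨e⟩ := Function.Embedding.nonempty_of_card_le hcard
  have he := e.injective
  have hout : ∀ i ∉ range e, Function.extend e w 0 i = 0 := fun i hi => by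
    rw [Function.extend_apply' _ _ _ (by simpa using hi)]; rfl
  refine ⟨Function.extend e w 0, Function.extend e z (fun _ => p), ?_, ?_, ?_, ?_⟩
  · intro i
    by_cases hi : i ∈ range e
    · obtain ⟨j, rfl⟩ := hi
      rw [he.extend_apply]
      exact (hw j).le
    · rw [hout i hi]
  · rw [← hw1]
    exact (Fintype.sum_of_injective e he _ _ hout fun i => by rw [he.extend_apply]).symm
  · intro i
    by_cases hi : i ∈ range e
    · obtain ⟨j, rfl⟩ := hi
      rw [he.extend_apply]
      exact hz ⟨j, rfl⟩
    · rw [Function.extend_apply' _ _ _ (by simpa using hi)]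
      exact hp
  · rw [← hsum]
    exact (Fintype.sum_of_injective e he _ _ (fun i hi => by rw [hout i hi, zero_smul])
      fun i => by rw [he.extend_apply, he.extend_apply]).symm

open Filter Topology in
/-- Constant speed reparametrization of an inspection curve. -/
theorem insp_reparam (β : ℝ → E3) (hβ : IsInspection 0 1 β) :
    ∃ f : ℝ → E3,
      (∀ x ∈ Icc (0:ℝ) 1, ∀ y ∈ Icc (0:ℝ) 1,
        dist (f x) (f y) ≤ (eVariationOn β (Icc 0 1)).toReal * dist x y) ∧
      f 0 = f 1 ∧ Metric.sphere (0 : E3) 1 ⊆ convexHull ℝ (f '' Icc 0 1) := by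
  obtain ⟨hc, hcl, hbv, hsp⟩ := hβ
  set I : Set ℝ := Icc 0 1 with hI
  set l : ℝ := (eVariationOn β I).toReal with hl
  have h0 : (0:ℝ) ∈ I := by simp [hI]
  have h1 : (1:ℝ) ∈ I := by simp [hI]
  have hlb : LocallyBoundedVariationOn β I :=
    BoundedVariationOn.locallyBoundedVariationOn hbv
  set v : ℝ → ℝ := variationOnFromTo β I 0 with hv
  have v0 : v 0 = 0 := variationOnFromTo.self β I 0
  have v1 : v 1 = l := by
    rw [hv, variationOnFromTo.eq_of_le β I zero_le_one, ← hI, inter_self]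
  have key : ∀ x ∈ I, ∀ y ∈ I, dist (β x) (β y) ≤ |v x - v y| := by
    intro x hx y hy
    wlog hxy : y ≤ x generalizing x y
    · rw [dist_comm, abs_sub_comm]
      exact this y hy x hx (le_of_not_ge hxy)
    rw [hv, variationOnFromTo.sub_right hlb h0 hx hy, variationOnFromTo.eq_of_le β I hxy,
      abs_of_nonneg ENNReal.toReal_nonneg, dist_edist]
    exact ENNReal.toReal_mono (hlb y x hy hx)
      (eVariationOn.edist_le _ ⟨hx, hxy, le_rfl⟩ ⟨hy, le_rfl, hxy⟩)
  have vmono : MonotoneOn v I := variationOnFromTo.monotoneOn hlb h0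
  have vcont : ContinuousOn v I := by
    intro b hb
    have hL : Tendsto v (𝓝[I ∩ Iio b] b) (𝓝 (v b)) := by
      have := variationOnFromTo.tendsto_left (s := I) h0 hb hlb
        ((hc b hb).mono_left (nhdsWithin_mono _ inter_subset_left))
      simpa using this
    have hR : Tendsto v (𝓝[I ∩ Ioi b] b) (𝓝 (v b)) := by
      have := variationOnFromTo.tendsto_right (s := I) h0 hb hlb
        ((hc b hb).mono_left (nhdsWithin_mono _ inter_subset_left))
      simpa using this
    have hs : I ⊆ ((I ∩ Iio b) ∪ (I ∩ Ioi b)) ∪ {b} := by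
      intro x hx
      rcases lt_trichotomy x b with h | h | h
      · exact Or.inl (Or.inl ⟨hx, h⟩)
      · exact Or.inr h
      · exact Or.inl (Or.inr ⟨hx, h⟩)
    refine Tendsto.mono_left ?_ (nhdsWithin_mono _ hs)
    rw [nhdsWithin_union, nhdsWithin_union, nhdsWithin_singleton]
    exact (hL.sup hR).sup (tendsto_pure_nhds v b)
  have surj : ∀ s : ℝ, ∃ t, s ∈ I → t ∈ I ∧ v t = l * s := by
    intro s
    by_cases hs : s ∈ I
    · have hl0 : 0 ≤ l := ENNReal.toReal_nonneg
      have : l * s ∈ Icc (v 0) (v 1) := by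
        rw [v0, v1]
        exact ⟨mul_nonneg hl0 hs.1, mul_le_of_le_one_right hl0 hs.2⟩
      obtain ⟨t, ht, hvt⟩ := intermediate_value_Icc zero_le_one vcont this
      exact ⟨t, fun _ => ⟨ht, hvt⟩⟩
    · exact ⟨0, fun h => absurd h hs⟩
  choose τ hτ using surj
  have eqv : ∀ x ∈ I, ∀ y ∈ I, v x = v y → β x = β y := by
    intro x hx y hy h
    have := key x hx y hy
    rw [h, sub_self, abs_zero] at this
    exact dist_le_zero.1 this
  refine ⟨fun s => β (τ s), ?_, ?_, ?_⟩
  · intro x hx y hy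
    refine (key _ (hτ x hx).1 _ (hτ y hy).1).trans ?_
    rw [(hτ x hx).2, (hτ y hy).2, ← mul_sub, abs_mul, abs_of_nonneg ENNReal.toReal_nonneg,
      Real.dist_eq]
  · show β (τ 0) = β (τ 1)
    rw [eqv _ (hτ 0 h0).1 0 h0 (by rw [(hτ 0 h0).2, v0, mul_zero]),
      eqv _ (hτ 1 h1).1 1 h1 (by rw [(hτ 1 h1).2, v1, mul_one]), hcl]
  · refine hsp.trans (convexHull_mono ?_)
    rintro _ ⟨t, ht, rfl⟩
    have a1 : 0 ≤ v t := v0 ▸ vmono h0 ht ht.1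
    have a2 : v t ≤ l := v1 ▸ vmono ht h1 ht.2
    obtain ⟨s, hs, hst⟩ : ∃ s ∈ I, l * s = v t := by
      rcases eq_or_ne l 0 with h | h
      · exact ⟨0, h0, by rw [mul_zero]; linarith⟩
      · have hl0 : 0 < l := lt_of_le_of_ne ENNReal.toReal_nonneg h.symm
        exact ⟨v t / l, ⟨div_nonneg a1 hl0.le, (div_le_one hl0).2 a2⟩, by field_simp⟩
    exact ⟨s, hs, eqv _ (hτ s hs).1 t ht (by rw [(hτ s hs).2, hst])⟩

/-- An explicit inspection curve. -/
theorem insp_exists : ∃ β : ℝ → E3, IsInspection 0 1 β := by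
  let β : ℝ → E3 := fun t => !₂[4 * cos (2 * π * t), 4 * sin (2 * π * t), 4 * cos (4 * π * t)]
  have hd : ContDiff ℝ 1 β := by
    rw [contDiff_euclidean]
    intro i
    fin_cases i <;> simp [β] <;> fun_prop
  have p0 : β 0 = !₂[4, 0, 4] := by simp [β]
  have p1 : β (1/4) = !₂[0, 4, -4] := by
    simp only [β]
    rw [show 2 * π * (1/4) = π / 2 by ring, show 4 * π * (1/4) = π by ring]
    simp
  have p2 : β (1/2) = !₂[-4, 0, 4] := by
    simp only [β]
    rw [show 2 * π * (1/2) = π by ring, show 4 * π * (1/2) = 2 * π by ring]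
    simp
  have p3 : β (3/4) = !₂[0, -4, -4] := by
    simp only [β]
    rw [show 2 * π * (3/4) = π / 2 + π by ring, show 4 * π * (3/4) = π + 2 * π by ring]
    simp [cos_add, sin_add]
  have p4 : β 1 = !₂[4, 0, 4] := by
    simp only [β]
    rw [show 2 * π * 1 = 2 * π by ring, show 4 * π * 1 = 2 * π + 2 * π by ring, cos_add (2 * π)]
    simp
  refine ⟨β, hd.continuous.continuousOn, by rw [p0, p4], ?_, ?_⟩
  · obtain ⟨K, hK⟩ := (hd.locallyLipschitz.locallyLipschitzOn
      (s := Icc 0 1)).exists_lipschitzOnWith_of_compact isCompact_Icc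
    have := hK.locallyBoundedVariationOn 0 1 (by simp) (by simp)
    rwa [inter_self] at this
  · intro x hx
    have hn : x 0 ^ 2 + x 1 ^ 2 + x 2 ^ 2 = 1 := by
      have : ‖x‖ ^ 2 = 1 := by rw [mem_sphere_zero_iff_norm.1 hx]; norm_num
      rw [EuclideanSpace.real_norm_sq_eq, Fin.sum_univ_three] at this
      exact this
    have b0 : |x 0| ≤ 1 := (sq_le_one_iff_abs_le_one _).1
      (by nlinarith [sq_nonneg (x 1), sq_nonneg (x 2)])
    have b1 : |x 1| ≤ 1 := (sq_le_one_iff_abs_le_one _).1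
      (by nlinarith [sq_nonneg (x 0), sq_nonneg (x 2)])
    have b2 : |x 2| ≤ 1 := (sq_le_one_iff_abs_le_one _).1
      (by nlinarith [sq_nonneg (x 1), sq_nonneg (x 0)])
    rw [abs_le] at b0 b1 b2
    have hmem : ∀ t ∈ Icc (0:ℝ) 1, β t ∈ convexHull ℝ (β '' Icc 0 1) := fun t ht =>
      subset_convexHull ℝ _ ⟨t, ht, rfl⟩
    have := (convex_convexHull ℝ (β '' Icc 0 1)).sum_mem (t := Finset.univ)
      (w := ![(1 + x 2 / 4) / 4 + x 0 / 8, (1 - x 2 / 4) / 4 + x 1 / 8,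
        (1 + x 2 / 4) / 4 - x 0 / 8, (1 - x 2 / 4) / 4 - x 1 / 8])
      (z := ![β 0, β (1/4), β (1/2), β (3/4)])
      (by intro i _; fin_cases i <;> simp <;> linarith)
      (by simp [Fin.sum_univ_four]; ring)
      (by
        intro i _
        fin_cases i
        · exact hmem 0 (by norm_num)
        · exact hmem (1/4) (by norm_num)
        · exact hmem (1/2) (by norm_num)
        · exact hmem (3/4) (by norm_num))
    convert this using 1
    rw [p0, p1, p2, p3]
    ext i
    fin_cases i <;> simp [Fin.sum_univ_four] <;> ring

open Filter Topology in
/-- **Existence of a minimal inspection curve.** There is an inspection curve on `[0,1]`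
whose length is least among all inspection curves on `[0,1]`. -/
theorem exists_minimal_inspection_curve :
    ∃ γ : ℝ → E3, IsInspection 0 1 γ ∧
      ∀ β : ℝ → E3, IsInspection 0 1 β →
        eVariationOn γ (Set.Icc 0 1) ≤ eVariationOn β (Set.Icc 0 1) := by
  let S : Set ℝ≥0∞ := {l | ∃ β : ℝ → E3, IsInspection 0 1 β ∧ eVariationOn β (Icc 0 1) = l}
  have hS : S.Nonempty := by
    obtain ⟨β, hβ⟩ := insp_exists
    exact ⟨_, β, hβ, rfl⟩
  have hStop : sInf S ≠ ⊤ := by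
    obtain ⟨_, β, hβ, rfl⟩ := hS
    exact ne_top_of_le_ne_top hβ.2.2.1 (sInf_le ⟨β, hβ, rfl⟩)
  obtain ⟨u, hua, hut, huS⟩ := exists_seq_tendsto_sInf hS (OrderBot.bddBelow S)
  set L : ℝ := (sInf S).toReal with hL
  have hutR : Tendsto (fun n => (u n).toReal) atTop (𝓝 L) :=
    (ENNReal.tendsto_toReal hStop).comp hut
  have hF : ∀ n, ∃ f : ℝ → E3,
      (∀ x ∈ Icc (0:ℝ) 1, ∀ y ∈ Icc (0:ℝ) 1, dist (f x) (f y) ≤ (u n).toReal * dist x y) ∧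
      f 0 = f 1 ∧ Metric.sphere (0 : E3) 1 ⊆ convexHull ℝ (f '' Icc 0 1) := by
    intro n
    obtain ⟨β, hβ, h⟩ := huS n
    rw [← h]
    exact insp_reparam β hβ
  choose F hLip hcl hsp using hF
  have h0 : (0:ℝ) ∈ Icc (0:ℝ) 1 := by simp
  have h1 : (1:ℝ) ∈ Icc (0:ℝ) 1 := by simp
  -- uniform bound
  obtain ⟨R, hR⟩ : ∃ R, ∀ n, (u n).toReal ≤ R := by
    obtain ⟨R, hR⟩ := hutR.bddAbove_range
    exact ⟨R, fun n => hR ⟨n, rfl⟩⟩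
  have hdiam : ∀ n, ∀ t ∈ Icc (0:ℝ) 1, dist (F n t) (F n 0) ≤ R := by
    intro n t ht
    refine (hLip n t ht 0 h0).trans ?_
    have : dist t 0 ≤ 1 := by rw [Real.dist_eq, sub_zero, abs_of_nonneg ht.1]; exact ht.2
    exact (mul_le_of_le_one_right ENNReal.toReal_nonneg this).trans (hR n)
  have hbd : ∀ n, ∀ t ∈ Icc (0:ℝ) 1, F n t ∈ Metric.closedBall (0:E3) (1 + R + R) := by
    intro n t ht
    let x : E3 := EuclideanSpace.single 0 1
    have hx : x ∈ Metric.sphere (0:E3) 1 := by simp [x]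
    have h2 : convexHull ℝ (F n '' Icc 0 1) ⊆ Metric.closedBall (F n 0) R :=
      convexHull_min (by rintro _ ⟨s, hs, rfl⟩; exact hdiam n s hs) (convex_closedBall _ _)
    have h3 : dist x (F n 0) ≤ R := h2 (hsp n hx)
    have h4 : dist x 0 = 1 := hx
    have h5 := dist_triangle (F n t) (F n 0) 0
    have h6 := dist_triangle (F n 0) x 0
    rw [dist_comm (F n 0) x] at h6
    have := hdiam n t ht
    rw [Metric.mem_closedBall]
    linarith
  let U : Ultrafilter ℕ := hyperfilter ℕ
  have hUat : (U : Filter ℕ) ≤ atTop := by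
    rw [← Nat.cofinite_eq_atTop]; exact hyperfilter_le_cofinite
  have hlim : ∀ t : ℝ, ∃ p : E3, t ∈ Icc (0:ℝ) 1 → Tendsto (fun n => F n t) U (𝓝 p) := by
    intro t
    by_cases ht : t ∈ Icc (0:ℝ) 1
    · obtain ⟨p, -, hp⟩ := (isCompact_closedBall (0:E3) (1 + R + R)).ultrafilter_le_nhds
        (U.map fun n => F n t) (by
          rw [le_principal_iff]
          exact Eventually.of_forall (f := (U : Filter ℕ)) fun n => hbd n t ht)
      exact ⟨p, fun _ => hp⟩
    · exact ⟨0, fun h => absurd h ht⟩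
  choose f hf using hlim
  have hfL : ∀ x ∈ Icc (0:ℝ) 1, ∀ y ∈ Icc (0:ℝ) 1, dist (f x) (f y) ≤ L * dist x y := by
    intro x hx y hy
    exact le_of_tendsto_of_tendsto' ((hf x hx).dist (hf y hy))
      ((hutR.mono_left hUat).mul_const _) (fun n => hLip n x hx y hy)
  have hfLip : LipschitzOnWith (sInf S).toNNReal f (Icc 0 1) :=
    LipschitzOnWith.of_dist_le_mul hfL
  have hvar : eVariationOn f (Icc 0 1) ≤ sInf S := by
    have h := LipschitzOnWith.comp_eVariationOn_le hfLip (g := (id : ℝ → ℝ)) (s := Icc 0 1)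
      (mapsTo_id _)
    rw [eVariationOn_id_Icc] at h
    simpa [ENNReal.coe_toNNReal hStop] using h
  have hclosed : f 0 = f 1 := by
    refine tendsto_nhds_unique (hf 0 h0) ?_
    simp_rw [hcl]
    exact hf 1 h1
  refine ⟨f, ⟨hfLip.continuousOn, hclosed, ne_top_of_le_ne_top hStop hvar, ?_⟩, ?_⟩
  · intro x hx
    have hex : ∀ n, ∃ (w : Fin 4 → ℝ) (t : Fin 4 → ℝ), (∀ i, 0 ≤ w i) ∧ ∑ i, w i = 1 ∧
        (∀ i, t i ∈ Icc (0:ℝ) 1) ∧ ∑ i, w i • F n (t i) = x := by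
      intro n
      obtain ⟨w, z, hw, hw1, hz, hx'⟩ := caratheodory_fin (hsp n hx)
      choose t ht htz using hz
      exact ⟨w, t, hw, hw1, ht, by simp_rw [htz]; exact hx'⟩
    choose w t hw hw1 ht hsum using hex
    have hwlim : ∀ i, ∃ a ∈ Icc (0:ℝ) 1, Tendsto (fun n => w n i) U (𝓝 a) := by
      intro i
      refine (isCompact_Icc (a := (0:ℝ)) (b := 1)).ultrafilter_le_nhds (U.map fun n => w n i) ?_
      rw [le_principal_iff]
      refine Eventually.of_forall (f := (U : Filter ℕ)) fun n => ⟨hw n i, ?_⟩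
      rw [← hw1 n]
      exact Finset.single_le_sum (fun j _ => hw n j) (Finset.mem_univ i)
    have htlim : ∀ i, ∃ s ∈ Icc (0:ℝ) 1, Tendsto (fun n => t n i) U (𝓝 s) := by
      intro i
      refine (isCompact_Icc (a := (0:ℝ)) (b := 1)).ultrafilter_le_nhds (U.map fun n => t n i) ?_
      rw [le_principal_iff]
      exact Eventually.of_forall (f := (U : Filter ℕ)) fun n => ht n i
    choose a ha hwa using hwlim
    choose s hs hts using htlim
    have hFt : ∀ i, Tendsto (fun n => F n (t n i)) U (𝓝 (f (s i))) := by
      intro i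
      have hz : Tendsto (fun n => dist (F n (s i)) (F n (t n i))) U (𝓝 0) := by
        refine squeeze_zero (fun _ => dist_nonneg) (fun n => hLip n _ (hs i) _ (ht n i)) ?_
        have := (hutR.mono_left hUat).mul ((tendsto_const_nhds (x := s i)).dist (hts i))
        simpa using this
      exact (tendsto_iff_of_dist hz).1 (hf (s i) (hs i))
    have hlimsum : Tendsto (fun n => ∑ i, w n i • F n (t n i)) U (𝓝 (∑ i, a i • f (s i))) :=
      tendsto_finsetSum _ fun i _ => (hwa i).smul (hFt i)
    have hlimw : Tendsto (fun n => ∑ i, w n i) U (𝓝 (∑ i, a i)) :=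
      tendsto_finsetSum _ fun i _ => hwa i
    simp_rw [hsum] at hlimsum
    simp_rw [hw1] at hlimw
    rw [tendsto_nhds_unique tendsto_const_nhds hlimsum]
    exact (convex_convexHull ℝ (f '' Icc 0 1)).sum_mem (fun i _ => (ha i).1)
      (tendsto_nhds_unique tendsto_const_nhds hlimw).symm
      (fun i _ => subset_convexHull ℝ _ ⟨s i, hs i, rfl⟩)
  · intro β hβ
    exact hvar.trans (sInf_le ⟨β, hβ, rfl⟩)
end
end
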